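/- Let R be a commutative noetherian ring. The maps φ and ψ, defined by φ(X)(p) = max_{X∈X} pd_{R_p} X_p and ψ(f) = { M ∈ mod R : pd_{R_p} M_p ≤ f(p) for all p ∈ Spec R }, are mutually inverse bijections between the set of resolving subcategories of mod R contained in PD(R) and the set of grade consistent functions on Spec R. -/

import Mathlib

universe u

open CategoryTheory

namespace ResolvPaper

variable (R : Type u) [CommRing R]

/-- `IsSES f g` means `0 → A → B → C → 0` is a short exact sequence. -/
def IsSES {R : Type u} [CommRing R] {A B C : Type u} [AddCommGroup A] [Module R A]
    [AddCommGroup B] [Module R B] [AddCommGroup C] [Module R C]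
    (f : A →ₗ[R] B) (g : B →ₗ[R] C) : Prop :=
  Function.Injective f ∧ Function.Surjective g ∧ LinearMap.range f = LinearMap.ker g

/-- A resolving subcategory of `mod R`, viewed as a set of bundled modules
closed under isomorphism, containing the finitely generated projective modules, and closed
under direct summands, extensions and syzygies. -/
structure IsResolving (𝒳 : Set (ModuleCat.{u} R)) : Prop where
  fg : ∀ M ∈ 𝒳, Module.Finite R M
  iso_closed : ∀ M N : ModuleCat.{u} R, Nonempty (M ≃ₗ[R] N) → M ∈ 𝒳 → N ∈ 𝒳
  proj_mem : ∀ M : ModuleCat.{u} R, Module.Finite R M → Module.Projective R M → M ∈ 𝒳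
  summand_closed : ∀ M N : ModuleCat.{u} R, ModuleCat.of R (↥M × ↥N) ∈ 𝒳 → M ∈ 𝒳
  ext_closed : ∀ (A B C : ModuleCat.{u} R) (f : A →ₗ[R] B) (g : B →ₗ[R] C),
    IsSES f g → A ∈ 𝒳 → C ∈ 𝒳 → B ∈ 𝒳
  syzygy_closed : ∀ (K P M : ModuleCat.{u} R) (f : K →ₗ[R] P) (g : P →ₗ[R] M),
    IsSES f g → Module.Finite R K → Module.Finite R P → Module.Projective R P →
    M ∈ 𝒳 → K ∈ 𝒳

/-- The resolving closure: the smallest resolving subcategory containing `S`. -/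
def resClosure (S : Set (ModuleCat.{u} R)) : Set (ModuleCat.{u} R) :=
  ⋂₀ {𝒳 | IsResolving R 𝒳 ∧ S ⊆ 𝒳}

/-- An extension-closed subcategory of `mod R`: closed under isomorphism,
direct summands and extensions. -/
def IsExtClosed (𝒳 : Set (ModuleCat.{u} R)) : Prop :=
  (∀ M N : ModuleCat.{u} R, Nonempty (M ≃ₗ[R] N) → M ∈ 𝒳 → N ∈ 𝒳) ∧
  (∀ M N : ModuleCat.{u} R, ModuleCat.of R (↥M × ↥N) ∈ 𝒳 → M ∈ 𝒳) ∧
  (∀ (A B C : ModuleCat.{u} R) (f : A →ₗ[R] B) (g : B →ₗ[R] C),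
    IsSES f g → A ∈ 𝒳 → C ∈ 𝒳 → B ∈ 𝒳)

/-- The extension closure of a set of modules. -/
def extClosure (S : Set (ModuleCat.{u} R)) : Set (ModuleCat.{u} R) :=
  ⋂₀ {𝒳 | IsExtClosed R 𝒳 ∧ S ⊆ 𝒳}

/-- `add R`: direct summands of finite free modules. -/
def addR : Set (ModuleCat.{u} R) :=
  {M | ∃ (n : ℕ) (N : ModuleCat.{u} R), Nonempty ((↥M × ↥N) ≃ₗ[R] (Fin n → R))}

/-- `pdLE n M` : the projective dimension of `M` is at most `n`. -/
def pdLE : ℕ → ModuleCat.{u} R → Prop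
  | 0, M => Module.Projective R M
  | n+1, M => ∃ (K P : ModuleCat.{u} R) (f : K →ₗ[R] P) (g : P →ₗ[R] M),
      Module.Finite R P ∧ Module.Projective R P ∧ IsSES f g ∧ pdLE n K

/-- The projective dimension, an element of `WithBot ℕ∞`; the zero module
has projective dimension `⊥ = -∞`. -/
noncomputable def pdim (M : ModuleCat.{u} R) : WithBot ℕ∞ :=
  sInf {x : WithBot ℕ∞ | (x = ⊥ ∧ Subsingleton M) ∨ ∃ n : ℕ, x = (n : ℕ∞) ∧ pdLE R n M}

/-- The depth of `M` with respect to the ideal `I`: the supremum of lengths of weakly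
`M`-regular sequences contained in `I`.  The zero module has depth `∞`. -/
noncomputable def depthE (I : Ideal R) (M : Type u) [AddCommGroup M] [Module R M] : ℕ∞ :=
  sSup {x : ℕ∞ | ∃ rs : List R, (∀ r ∈ rs, r ∈ I) ∧
    RingTheory.Sequence.IsWeaklyRegular M rs ∧ x = rs.length}

/-- The grade of an ideal: the length of a maximal `R`-regular sequence in `I`. -/
noncomputable def gradeE (I : Ideal R) : ℕ∞ := depthE R I R

/-- A grade consistent function on `Spec R`. -/
def GradeConsistent (f : PrimeSpectrum R → ℕ) : Prop :=
  (∀ p : PrimeSpectrum R, (f p : ℕ∞) ≤ gradeE R p.asIdeal) ∧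
  (∀ p q : PrimeSpectrum R, p.asIdeal ≤ q.asIdeal → f p ≤ f q)

/-- The localization of a module at a prime, as a module over the local ring `R_p`. -/
noncomputable abbrev localizeM (p : PrimeSpectrum R) (M : ModuleCat.{u} R) :
    ModuleCat.{u} (Localization.AtPrime p.asIdeal) :=
  ModuleCat.of (Localization.AtPrime p.asIdeal) (LocalizedModule p.asIdeal.primeCompl M)

/-- `pd_{R_p} M_p`. -/
noncomputable def localPdim (p : PrimeSpectrum R) (M : ModuleCat.{u} R) : WithBot ℕ∞ :=
  pdim (Localization.AtPrime p.asIdeal) (localizeM R p M)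

/-- `depth_{R_p} M_p`. -/
noncomputable def localDepth (p : PrimeSpectrum R) (M : ModuleCat.{u} R) : ℕ∞ :=
  depthE (Localization.AtPrime p.asIdeal)
    (IsLocalRing.maximalIdeal (Localization.AtPrime p.asIdeal))
    (LocalizedModule p.asIdeal.primeCompl M)

/-- The height of a prime ideal. -/
noncomputable def heightE (p : PrimeSpectrum R) : ℕ∞ := Order.height p

/-- `PD(R)` : finitely generated modules of finite projective dimension. -/
def PDcat : Set (ModuleCat.{u} R) :=
  {M | Module.Finite R M ∧ ∃ n : ℕ, pdLE R n M}

/-- `MCM(R)` : maximal Cohen-Macaulay modules. -/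
def MCMcat : Set (ModuleCat.{u} R) :=
  {M | Module.Finite R M ∧ ∀ p : PrimeSpectrum R, heightE R p ≤ localDepth R p M}

/-- The nonfree locus of a module. -/
def NF (M : ModuleCat.{u} R) : Set (PrimeSpectrum R) :=
  {p | ¬ Module.Free (Localization.AtPrime p.asIdeal) (LocalizedModule p.asIdeal.primeCompl M)}

/-- The infinite projective dimension locus of a module. -/
def IPD (M : ModuleCat.{u} R) : Set (PrimeSpectrum R) :=
  {p | localPdim R p M = (⊤ : WithBot ℕ∞)}

/-- The infinite projective dimension locus of a collection of modules. -/
def IPDcat (𝒳 : Set (ModuleCat.{u} R)) : Set (PrimeSpectrum R) :=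
  ⋃ M ∈ 𝒳, IPD R M

/-- The modules in `mod R` whose infinite projective dimension locus lies in `W`. -/
def IPDinv (W : Set (PrimeSpectrum R)) : Set (ModuleCat.{u} R) :=
  {M | Module.Finite R M ∧ IPD R M ⊆ W}

/-- A specialization closed subset of `Spec R`. -/
def SpecClosed (W : Set (PrimeSpectrum R)) : Prop :=
  ∀ p ∈ W, ∀ q : PrimeSpectrum R, p.asIdeal ≤ q.asIdeal → q ∈ W

/-- Membership in `add 𝒳_p`: direct summands of localizations of finite direct sums
of members of `𝒳`. -/
def memAddLocal (𝒳 : Set (ModuleCat.{u} R)) (p : PrimeSpectrum R)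
    (N : ModuleCat.{u} (Localization.AtPrime p.asIdeal)) : Prop :=
  ∃ (n : ℕ) (X : Fin n → ModuleCat.{u} R), (∀ i, X i ∈ 𝒳) ∧
    ∃ (N' : ModuleCat.{u} (Localization.AtPrime p.asIdeal)),
      Nonempty ((↥N × ↥N') ≃ₗ[Localization.AtPrime p.asIdeal]
        ((i : Fin n) → LocalizedModule p.asIdeal.primeCompl (X i)))

/-- `K` is an `n`-th syzygy of `M` computed from a minimal free resolution over the
local ring `S`. -/
def IsMinSyz (S : Type u) [CommRing S] [IsLocalRing S] :
    ℕ → ModuleCat.{u} S → ModuleCat.{u} S → Prop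
  | 0, M, K => Nonempty (K ≃ₗ[S] M)
  | n+1, M, K => ∃ (F : ModuleCat.{u} S) (g : F →ₗ[S] M) (K' : ModuleCat.{u} S)
      (i : K' →ₗ[S] F),
      Module.Finite S F ∧ Module.Free S F ∧ Function.Surjective g ∧
      (LinearMap.ker g ≤ (IsLocalRing.maximalIdeal S) • (⊤ : Submodule S F)) ∧
      Function.Injective i ∧ LinearMap.range i = LinearMap.ker g ∧
      IsMinSyz S n K' K

/-- `K` is an `n`-th syzygy of `M` in some projective resolution (over any ring). -/
def IsSyz : ℕ → ModuleCat.{u} R → ModuleCat.{u} R → Prop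
  | 0, M, K => Nonempty (K ≃ₗ[R] M)
  | n+1, M, K => ∃ (F : ModuleCat.{u} R) (g : F →ₗ[R] M) (K' : ModuleCat.{u} R)
      (i : K' →ₗ[R] F),
      Module.Finite R F ∧ Module.Projective R F ∧ Function.Surjective g ∧
      Function.Injective i ∧ LinearMap.range i = LinearMap.ker g ∧
      IsSyz n K' K

/-- `T` is (isomorphic to) the Auslander transpose of `M`, computed from a minimal
free presentation over the local ring `S`. -/
def IsTranspose (S : Type u) [CommRing S] [IsLocalRing S] (M T : ModuleCat.{u} S) : Prop :=
  ∃ (F1 F0 : ModuleCat.{u} S) (d : F1 →ₗ[S] F0) (e : F0 →ₗ[S] M),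
    Module.Finite S F0 ∧ Module.Free S F0 ∧ Module.Finite S F1 ∧ Module.Free S F1 ∧
    Function.Surjective e ∧ LinearMap.range d = LinearMap.ker e ∧
    LinearMap.ker e ≤ (IsLocalRing.maximalIdeal S) • (⊤ : Submodule S F0) ∧
    LinearMap.ker d ≤ (IsLocalRing.maximalIdeal S) • (⊤ : Submodule S F1) ∧
    Nonempty (T ≃ₗ[S] ((Module.Dual S F1) ⧸ LinearMap.range d.dualMap))

/-- `T` is (isomorphic to) `Tr Ω^n M` over the local ring `S`. -/
def IsTrOmega (S : Type u) [CommRing S] [IsLocalRing S] (n : ℕ) (M T : ModuleCat.{u} S) :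
    Prop :=
  ∃ K : ModuleCat.{u} S, IsMinSyz S n M K ∧ IsTranspose S K T

/-- Resolving subcategory `𝒳` is dominant on `W ⊆ Spec R`. -/
def DominantOn (𝒳 : Set (ModuleCat.{u} R)) (W : Set (PrimeSpectrum R)) : Prop :=
  ∀ p ∈ W, ∃ (n : ℕ) (K : ModuleCat.{u} (Localization.AtPrime p.asIdeal)),
    IsMinSyz (Localization.AtPrime p.asIdeal) n
      (ModuleCat.of (Localization.AtPrime p.asIdeal)
        (IsLocalRing.ResidueField (Localization.AtPrime p.asIdeal))) K ∧
    memAddLocal R 𝒳 p K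

/-- Dominant resolving subcategory. -/
def Dominant (𝒳 : Set (ModuleCat.{u} R)) : Prop := DominantOn R 𝒳 Set.univ

/-- A (noetherian) local ring is Cohen-Macaulay if its depth equals its Krull dimension. -/
def IsCMLocalRing (S : Type u) [CommRing S] [IsLocalRing S] : Prop :=
  IsNoetherianRing S ∧
    ((depthE S (IsLocalRing.maximalIdeal S) S : WithBot ℕ∞) = ringKrullDim S)

/-- A regular local ring: a noetherian local ring whose maximal ideal is generated by
`dim S` elements. -/
def IsRegLocalRing (S : Type u) [CommRing S] [IsLocalRing S] : Prop :=
  IsNoetherianRing S ∧ ∃ s : Finset S,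
    Ideal.span (s : Set S) = IsLocalRing.maximalIdeal S ∧
    ringKrullDim S = (s.card : WithBot ℕ∞)

/-- The singular locus of `R`. -/
def SingLocus : Set (PrimeSpectrum R) :=
  {p | ¬ IsRegLocalRing (Localization.AtPrime p.asIdeal)}

/-- A hypersurface local ring: the completion is a quotient of a regular local ring by
one element. -/
def IsHypersurfaceLocalRing (S : Type u) [CommRing S] [IsLocalRing S] : Prop :=
  ∃ (T : Type u) (_ : CommRing T) (_ : IsLocalRing T) (f : T),
    IsRegLocalRing T ∧
    Nonempty ((AdicCompletion (IsLocalRing.maximalIdeal S) S) ≃+* (T ⧸ Ideal.span {f}))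

/-- A complete intersection local ring: the completion is a quotient of a regular local
ring by a regular sequence. -/
def IsCompleteIntersectionLocalRing (S : Type u) [CommRing S] [IsLocalRing S] : Prop :=
  ∃ (T : Type u) (_ : CommRing T) (_ : IsLocalRing T) (rs : List T),
    IsRegLocalRing T ∧ RingTheory.Sequence.IsRegular T rs ∧
    Nonempty ((AdicCompletion (IsLocalRing.maximalIdeal S) S) ≃+*
      (T ⧸ Ideal.ofList rs))

/-- The subquotient `A / (A ⊓ B)` of two submodules, used for homology. -/
def subquot {S M : Type u} [CommRing S] [AddCommGroup M] [Module S M]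
    (A B : Submodule S M) : Type u :=
  A ⧸ (B.comap A.subtype)

noncomputable instance {S M : Type u} [CommRing S] [AddCommGroup M] [Module S M]
    (A B : Submodule S M) : AddCommGroup (subquot A B) :=
  inferInstanceAs (AddCommGroup (A ⧸ (B.comap A.subtype)))

noncomputable instance {S M : Type u} [CommRing S] [AddCommGroup M] [Module S M]
    (A B : Submodule S M) : Module S (subquot A B) :=
  inferInstanceAs (Module S (A ⧸ (B.comap A.subtype)))

/-- `E` is (isomorphic to) `Ext^{j+1}_S(M, S)`, computed from a finite free resolution. -/
def IsExtPos (S : Type u) [CommRing S] (j : ℕ) (M E : ModuleCat.{u} S) : Prop :=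
  ∃ (F : ℕ → ModuleCat.{u} S) (d : ∀ i : ℕ, (F (i+1) : Type u) →ₗ[S] F i)
    (e : (F 0 : Type u) →ₗ[S] M),
    (∀ i, Module.Finite S (F i)) ∧ (∀ i, Module.Free S (F i)) ∧
    Function.Surjective e ∧ LinearMap.range (d 0) = LinearMap.ker e ∧
    (∀ i, LinearMap.range (d (i+1)) = LinearMap.ker (d i)) ∧
    Nonempty (E ≃ₗ[S]
      subquot (LinearMap.ker ((d (j+1)).dualMap)) (LinearMap.range ((d j).dualMap)))

/-- `T` is (isomorphic to) `Tor_n^S(M, N)`, computed from a projective resolution of `M`. -/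
def IsTor (S : Type u) [CommRing S] (n : ℕ) (M N T : ModuleCat.{u} S) : Prop :=
  ∃ (F : ℕ → ModuleCat.{u} S) (d : ∀ i : ℕ, (F (i+1) : Type u) →ₗ[S] F i)
    (e : (F 0 : Type u) →ₗ[S] M),
    (∀ i, Module.Projective S (F i)) ∧
    Function.Surjective e ∧ LinearMap.range (d 0) = LinearMap.ker e ∧
    (∀ i, LinearMap.range (d (i+1)) = LinearMap.ker (d i)) ∧
    (match n with
      | 0 => Nonempty (T ≃ₗ[S] TensorProduct S M N)
      | (j+1) => Nonempty (T ≃ₗ[S]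
          subquot (LinearMap.ker (LinearMap.rTensor (↥N) (d j)))
            (LinearMap.range (LinearMap.rTensor (↥N) (d (j+1))))))

/-- `idLE n M` : the injective dimension of `M` is at most `n`. -/
def idLE (S : Type u) [CommRing S] : ℕ → ModuleCat.{u} S → Prop
  | 0, M => Module.Injective S M
  | n+1, M => ∃ (I C : ModuleCat.{u} S) (f : M →ₗ[S] I) (g : I →ₗ[S] C),
      IsSES f g ∧ Module.Injective S I ∧ idLE S n C

/-- `PD_0^n(R)` over a local ring: modules of projective dimension at most `n` that are
free on the punctured spectrum. -/
def PD0n [IsLocalRing R] (n : ℕ) : Set (ModuleCat.{u} R) :=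
  {M | Module.Finite R M ∧ pdLE R n M ∧
    ∀ p : PrimeSpectrum R, p.asIdeal ≠ IsLocalRing.maximalIdeal R →
      Module.Free (Localization.AtPrime p.asIdeal) (LocalizedModule p.asIdeal.primeCompl M)}

/-- `PD_0(R)` over a local ring: modules of finite projective dimension that are
free on the punctured spectrum. -/
def PD0 [IsLocalRing R] : Set (ModuleCat.{u} R) :=
  {M | Module.Finite R M ∧ (∃ n : ℕ, pdLE R n M) ∧
    ∀ p : PrimeSpectrum R, p.asIdeal ≠ IsLocalRing.maximalIdeal R →
      Module.Free (Localization.AtPrime p.asIdeal) (LocalizedModule p.asIdeal.primeCompl M)}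

/-- The residue field of a local ring, as a bundled module. -/
noncomputable abbrev residueMod (S : Type u) [CommRing S] [IsLocalRing S] : ModuleCat.{u} S :=
  ModuleCat.of S (IsLocalRing.ResidueField S)


/-- The map `ψ` sending a grade consistent function to a subcategory of `PD(R)`. -/
def psiPd (f : PrimeSpectrum R → ℕ) : Set (ModuleCat.{u} R) :=
  {M | Module.Finite R M ∧
    ∀ p : PrimeSpectrum R, localPdim R p M ≤ ((f p : ℕ∞) : WithBot ℕ∞)}

section P1
open CategoryTheory
variable {R : Type u} [CommRing R]
variable {A B C K F M X : Type u}
  [AddCommGroup A] [Module R A] [AddCommGroup B] [Module R B] [AddCommGroup C] [Module R C]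
  [AddCommGroup K] [Module R K] [AddCommGroup F] [Module R F] [AddCommGroup M] [Module R M]
  [AddCommGroup X] [Module R X]

theorem IsSES.comp_zero {f : A →ₗ[R] B} {g : B →ₗ[R] C} (h : IsSES f g) (a : A) :
    g (f a) = 0 := by
  have : f a ∈ LinearMap.ker g := h.2.2 ▸ LinearMap.mem_range_self f a
  exact this

theorem IsSES.exists_pre {f : A →ₗ[R] B} {g : B →ₗ[R] C} (h : IsSES f g) (b : B)
    (hb : g b = 0) : ∃ a, f a = b := by
  have : b ∈ LinearMap.range f := h.2.2 ▸ hb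
  exact this

theorem IsSES.mk' {f : A →ₗ[R] B} {g : B →ₗ[R] C} (hf : ∀ a, f a = 0 → a = 0)
    (hg : Function.Surjective g) (h0 : ∀ a, g (f a) = 0)
    (h1 : ∀ b, g b = 0 → ∃ a, f a = b) : IsSES f g := by
  refine ⟨(injective_iff_map_eq_zero f).2 hf, hg, ?_⟩
  ext b
  constructor
  · rintro ⟨a, rfl⟩
    exact h0 a
  · intro hb
    exact h1 b hb

theorem IsSES.lift {f : A →ₗ[R] B} {g : B →ₗ[R] C} (h : IsSES f g) (u : X →ₗ[R] B)
    (hu : ∀ x, g (u x) = 0) : ∃ v : X →ₗ[R] A, ∀ x, f (v x) = u x := by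
  let e := LinearEquiv.ofInjective f h.1
  have hu' : ∀ x, u x ∈ LinearMap.range f := fun x => h.exists_pre _ (hu x)
  refine ⟨e.symm.toLinearMap ∘ₗ u.codRestrict _ hu', fun x => ?_⟩
  have := congrArg Subtype.val (e.apply_symm_apply (u.codRestrict _ hu' x))
  simpa [e] using this

theorem IsSES.desc {f : A →ₗ[R] B} {g : B →ₗ[R] C} (h : IsSES f g) (u : B →ₗ[R] X)
    (hu : ∀ a, u (f a) = 0) : ∃ v : C →ₗ[R] X, ∀ b, v (g b) = u b := by
  have hk : LinearMap.ker g ≤ LinearMap.ker u := by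
    rw [← h.2.2]
    rintro _ ⟨a, rfl⟩
    exact hu a
  let e := g.quotKerEquivOfSurjective h.2.1
  refine ⟨(LinearMap.ker g).liftQ u hk ∘ₗ e.symm.toLinearMap, fun b => ?_⟩
  have : e.symm (g b) = (LinearMap.ker g).mkQ b := by
    rw [LinearEquiv.symm_apply_eq]
    simp [e]
  simp [this]

theorem isSES_ker {g : B →ₗ[R] C} (hg : Function.Surjective g) :
    IsSES (LinearMap.ker g).subtype g :=
  ⟨Subtype.val_injective, hg, by simp⟩

theorem isSES_mkQ (N : Submodule R B) : IsSES N.subtype N.mkQ :=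
  ⟨Subtype.val_injective, N.mkQ_surjective, by simp⟩

theorem proj_lift [Module.Projective R X] {g : B →ₗ[R] C} (hg : Function.Surjective g)
    (u : X →ₗ[R] C) : ∃ v : X →ₗ[R] B, ∀ x, g (v x) = u x := by
  obtain ⟨v, hv⟩ := Module.projective_lifting_property g u hg
  exact ⟨v, fun x => by rw [← hv]; rfl⟩

theorem exists_cover (R : Type u) [CommRing R] (M : Type u) [AddCommGroup M] [Module R M]
    [Module.Finite R M] :
    ∃ (F : ModuleCat.{u} R) (g : F →ₗ[R] M), Module.Finite R F ∧ Module.Projective R F ∧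
      Function.Surjective g := by
  obtain ⟨n, f, hf⟩ := Module.Finite.exists_fin' R M
  exact ⟨ModuleCat.of R (Fin n → R), f, inferInstanceAs (Module.Finite R (Fin n → R)),
    inferInstanceAs (Module.Projective R (Fin n → R)), hf⟩

theorem exists_cover_ses (R : Type u) [CommRing R] (M : Type u) [AddCommGroup M] [Module R M]
    [Module.Finite R M] :
    ∃ (K F : ModuleCat.{u} R) (f : K →ₗ[R] F) (g : F →ₗ[R] M),
      Module.Finite R F ∧ Module.Projective R F ∧ IsSES f g := by
  obtain ⟨F, g, h1, h2, h3⟩ := exists_cover R M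
  exact ⟨ModuleCat.of R (LinearMap.ker g), F, (LinearMap.ker g).subtype, g, h1, h2, isSES_ker h3⟩

theorem IsSES.finite_left [IsNoetherianRing R] {f : A →ₗ[R] B} {g : B →ₗ[R] C} (h : IsSES f g)
    [Module.Finite R B] : Module.Finite R A :=
  Module.Finite.of_injective f h.1

theorem IsSES.finite_right {f : A →ₗ[R] B} {g : B →ₗ[R] C} (h : IsSES f g)
    [Module.Finite R B] : Module.Finite R C :=
  Module.Finite.of_surjective g h.2.1

theorem IsSES.finite_mid {f : A →ₗ[R] B} {g : B →ₗ[R] C} (h : IsSES f g)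
    [Module.Finite R A] [Module.Finite R C] : Module.Finite R B := by
  have h1 : Module.Finite R (LinearMap.ker g) := by
    rw [← h.2.2]
    infer_instance
  have h2 : Module.Finite R (B ⧸ LinearMap.ker g) :=
    Module.Finite.equiv (g.quotKerEquivOfSurjective h.2.1).symm
  exact Module.Finite.of_submodule_quotient (LinearMap.ker g)

/-- `s • id` factors through a finitely generated projective module -/
def SP (A : Type u) [AddCommGroup A] [Module R A] (s : R) : Prop :=
  ∃ (P : ModuleCat.{u} R) (u : A →ₗ[R] P) (v : P →ₗ[R] A), Module.Finite R P ∧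
    Module.Projective R P ∧ ∀ a, v (u a) = s • a

theorem SP.cover {s : R} (h : SP A s) {g : F →ₗ[R] A} (hg : Function.Surjective g) :
    ∃ σ : A →ₗ[R] F, ∀ a, g (σ a) = s • a := by
  obtain ⟨P, u, v, h1, h2, h3⟩ := h
  obtain ⟨w, hw⟩ := proj_lift hg v
  exact ⟨w ∘ₗ u, fun a => by simp [hw, h3]⟩

theorem SP.of_cover {s : R} [Module.Finite R F] [Module.Projective R F] (g : F →ₗ[R] A)
    (σ : A →ₗ[R] F) (h : ∀ a, g (σ a) = s • a) : SP A s :=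
  ⟨ModuleCat.of R F, σ, g, ‹_›, ‹_›, h⟩

theorem SP.of_proj [Module.Finite R A] [Module.Projective R A] (s : R) : SP A s :=
  SP.of_cover (F := A) LinearMap.id (s • LinearMap.id) (by simp)

theorem SP.retr {s t : R} (h : SP B s) (a : A →ₗ[R] B) (b : B →ₗ[R] A)
    (hab : ∀ x, b (a x) = t • x) : SP A (s * t) := by
  obtain ⟨P, u, v, h1, h2, h3⟩ := h
  exact ⟨P, u ∘ₗ a, b ∘ₗ v, h1, h2, fun x => by simp [h3, hab, mul_smul]⟩

theorem SP.smul {s : R} (h : SP A s) (t : R) : SP A (s * t) :=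
  h.retr LinearMap.id (t • LinearMap.id) (by simp)

theorem SP.add {s t : R} (h : SP A s) (h' : SP A t) : SP A (s + t) := by
  obtain ⟨P, u, v, h1, h2, h3⟩ := h
  obtain ⟨P', u', v', h1', h2', h3'⟩ := h'
  exact SP.of_cover (F := P × P') (v.coprod v') (u.prod u') (fun a => by
    simp [h3, h3', add_smul])

theorem SP.zero : SP A (0 : R) :=
  SP.of_cover (F := R) 0 0 (by simp)

theorem SP.ext {f : A →ₗ[R] B} {g : B →ₗ[R] C} (h : IsSES f g) {s t : R} (hA : SP A s)
    (hC : SP C t) : SP B (s * t) := by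
  obtain ⟨P, u, v, h1, h2, h3⟩ := hA
  obtain ⟨P', u', v', h1', h2', h3'⟩ := hC
  obtain ⟨φ, hφ⟩ := proj_lift h.2.1 v'
  obtain ⟨r, hr⟩ := h.lift (t • LinearMap.id - φ ∘ₗ u' ∘ₗ g) (fun x => by
    simp [hφ, h3'])
  refine SP.of_cover (F := P × P') ((f ∘ₗ v).coprod (s • φ)) ((u ∘ₗ r).prod (u' ∘ₗ g)) ?_
  intro b
  simp [h3, hr, smul_sub, mul_smul]

theorem SP.prod {s : R} (h : SP A s) [Module.Finite R F] [Module.Projective R F] :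
    SP (A × F) s := by
  obtain ⟨P, u, v, h1, h2, h3⟩ := h
  exact SP.of_cover (F := P × F) (v.prodMap (s • LinearMap.id)) (u.prodMap LinearMap.id) (by
    rintro ⟨a, x⟩
    simp [h3])

theorem SP.syz {f : K →ₗ[R] F} {g : F →ₗ[R] A} (h : IsSES f g) [Module.Finite R F]
    [Module.Projective R F] {s : R} (hA : SP A s) : SP K s := by
  obtain ⟨σ, hσ⟩ := hA.cover h.2.1
  obtain ⟨r, hr⟩ := h.lift (s • LinearMap.id - σ ∘ₗ g) (fun x => by simp [hσ])
  refine SP.of_cover r f fun a => h.1 ?_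
  simp [hr, h.comp_zero]

/-- the retract up to `t` lemma for syzygies -/
theorem retr_syz {K' F' M' : Type u} [AddCommGroup K'] [Module R K'] [AddCommGroup F']
    [Module R F'] [AddCommGroup M'] [Module R M']
    {i : K →ₗ[R] F} {π : F →ₗ[R] M} (h : IsSES i π)
    {i' : K' →ₗ[R] F'} {π' : F' →ₗ[R] M'} (h' : IsSES i' π')
    [Module.Projective R F] [Module.Projective R F']
    (a : M →ₗ[R] M') (b : M' →ₗ[R] M) {t : R} (hab : ∀ x, b (a x) = t • x) :
    ∃ (a' : K →ₗ[R] K' × F) (b' : K' × F →ₗ[R] K), ∀ x, b' (a' x) = t • x := by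
  obtain ⟨a0, ha0⟩ := proj_lift h'.2.1 (a ∘ₗ π)
  obtain ⟨b0, hb0⟩ := proj_lift h.2.1 (b ∘ₗ π')
  obtain ⟨a1, ha1⟩ := h'.lift (a0 ∘ₗ i) (fun x => by simp [ha0, h.comp_zero])
  obtain ⟨b1, hb1⟩ := h.lift (b0 ∘ₗ i') (fun x => by simp [hb0, h'.comp_zero])
  obtain ⟨v, hv⟩ := h.lift (b0 ∘ₗ a0 - t • LinearMap.id) (fun x => by
    simp [hb0, ha0, hab])
  refine ⟨a1.prod i, b1.coprod (-v), fun x => h.1 ?_⟩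
  simp [hb1, hv, ha1]

/-- `sp n M s`: `s • id` on the `n`-th syzygy of `M` factors through a f.g. projective -/
def sp : ∀ (_ : ℕ) (M : Type u) [AddCommGroup M] [Module R M] (_ : R), Prop
  | 0, M, _, _, s => SP M s
  | n+1, M, _, _, s => ∃ (K F : ModuleCat.{u} R) (f : K →ₗ[R] F) (g : F →ₗ[R] M),
      Module.Finite R F ∧ Module.Projective R F ∧ IsSES f g ∧ sp n K s

theorem IsSES.prodF {f : A →ₗ[R] B} {g : B →ₗ[R] C} (h : IsSES f g) :
    IsSES ((LinearMap.inl R B F) ∘ₗ f) (g.prodMap (LinearMap.id : F →ₗ[R] F)) := by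
  refine IsSES.mk' ?_ ?_ ?_ ?_
  · intro a ha
    apply h.1
    simpa using ha
  · rintro ⟨c, x⟩
    obtain ⟨b, rfl⟩ := h.2.1 c
    exact ⟨(b, x), rfl⟩
  · intro a
    simp [h.comp_zero]
  · rintro ⟨b, x⟩ hx
    simp at hx
    obtain ⟨a, rfl⟩ := h.exists_pre b hx.1
    exact ⟨a, by simp [hx.2]⟩

theorem sp.prod {n : ℕ} {s : R} (h : sp n A s) [Module.Finite R F] [Module.Projective R F] :
    sp n (A × F) s := by
  cases n with
  | zero => exact SP.prod h
  | succ n =>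
    obtain ⟨K, G, f, g, h1, h2, h3, h4⟩ := h
    exact ⟨K, ModuleCat.of R (G × F), _, _, inferInstanceAs (Module.Finite R (G × F)),
      inferInstanceAs (Module.Projective R (G × F)), h3.prodF, h4⟩

variable [IsNoetherianRing R]

theorem sp.retr {n : ℕ} {s t : R} [Module.Finite R A] (h : sp n B s) (a : A →ₗ[R] B)
    (b : B →ₗ[R] A) (hab : ∀ x, b (a x) = t • x) : sp n A (s * t) := by
  induction n generalizing A B with
  | zero => exact SP.retr h a b hab
  | succ n ih =>
    obtain ⟨K, G, f, g, h1, h2, h3, h4⟩ := h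
    obtain ⟨K', G', f', g', h1', h2', h3'⟩ := exists_cover_ses R A
    obtain ⟨a', b', hab'⟩ := retr_syz h3' h3 a b hab
    have := h3'.finite_left
    exact ⟨K', G', f', g', h1', h2', h3', ih h4.prod a' b' hab'⟩

theorem sp.syz {n : ℕ} {s : R} {f : K →ₗ[R] F} {g : F →ₗ[R] M} (h : IsSES f g)
    [Module.Finite R F] [Module.Projective R F] (hs : sp (n+1) M s) : sp n K s := by
  obtain ⟨K', G', f', g', h1', h2', h3', h4⟩ := hs
  obtain ⟨a', b', hab'⟩ := retr_syz h h3' (LinearMap.id : M →ₗ[R] M) LinearMap.id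
    (t := 1) (by simp)
  have := h.finite_left
  simpa using (sp.prod (F := F) h4).retr a' b' hab'

theorem sp_syz_iff {n : ℕ} {s : R} {f : K →ₗ[R] F} {g : F →ₗ[R] M} (h : IsSES f g)
    [Module.Finite R F] [Module.Projective R F] : sp (n+1) M s ↔ sp n K s :=
  ⟨sp.syz h, fun h' => ⟨ModuleCat.of R K, ModuleCat.of R F, f, g, ‹_›, ‹_›, h, h'⟩⟩

theorem sp.smul {n : ℕ} {s : R} [Module.Finite R A] (h : sp n A s) (t : R) : sp n A (s * t) :=
  h.retr LinearMap.id (t • LinearMap.id) (by simp)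

theorem sp.add {n : ℕ} {s t : R} [Module.Finite R A] (h : sp n A s) (h' : sp n A t) :
    sp n A (s + t) := by
  induction n generalizing A with
  | zero => exact SP.add h h'
  | succ n ih =>
    obtain ⟨K', G', f', g', h1', h2', h3'⟩ := exists_cover_ses R A
    have := h3'.finite_left
    rw [sp_syz_iff h3'] at h h' ⊢
    exact ih h h'

theorem sp.zero {n : ℕ} [Module.Finite R A] : sp n A (0 : R) := by
  induction n generalizing A with
  | zero => exact SP.zero
  | succ n ih =>
    obtain ⟨K', G', f', g', h1', h2', h3'⟩ := exists_cover_ses R A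
    have := h3'.finite_left
    rw [sp_syz_iff h3']
    exact ih

theorem sp.mono_succ {n : ℕ} {s : R} [Module.Finite R A] (h : sp n A s) : sp (n+1) A s := by
  induction n generalizing A with
  | zero =>
    obtain ⟨K', G', f', g', h1', h2', h3'⟩ := exists_cover_ses R A
    rw [sp_syz_iff h3']
    exact SP.syz h3' h
  | succ n ih =>
    obtain ⟨K', G', f', g', h1', h2', h3'⟩ := exists_cover_ses R A
    have := h3'.finite_left
    rw [sp_syz_iff h3'] at h ⊢
    exact ih h

/-- the horseshoe lemma -/
theorem horseshoe {f : A →ₗ[R] B} {g : B →ₗ[R] C} (h : IsSES f g)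
    {KA FA KC FC : Type u} [AddCommGroup KA] [Module R KA] [AddCommGroup FA] [Module R FA]
    [AddCommGroup KC] [Module R KC] [AddCommGroup FC] [Module R FC]
    {iA : KA →ₗ[R] FA} {πA : FA →ₗ[R] A} (hA : IsSES iA πA)
    {iC : KC →ₗ[R] FC} {πC : FC →ₗ[R] C} (hC : IsSES iC πC)
    [Module.Projective R FC] :
    ∃ (KB : ModuleCat.{u} R) (iB : KB →ₗ[R] FA × FC) (πB : FA × FC →ₗ[R] B)
      (f' : KA →ₗ[R] KB) (g' : KB →ₗ[R] KC), IsSES iB πB ∧ IsSES f' g' ∧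
      (∀ x, iB (f' x) = (iA x, 0)) ∧ (∀ x, iC (g' x) = (iB x).2) ∧
      (∀ x, πB (x, 0) = f (πA x)) ∧ (∀ x, g (πB x) = πC x.2) := by
  obtain ⟨φ, hφ⟩ := proj_lift h.2.1 πC
  let πB : FA × FC →ₗ[R] B := (f ∘ₗ πA).coprod φ
  have hπB : Function.Surjective πB := by
    intro b
    obtain ⟨c, hc⟩ := hC.2.1 (g b)
    obtain ⟨a, ha⟩ := h.exists_pre (b - φ c) (by simp [hφ, hc])
    obtain ⟨x, rfl⟩ := hA.2.1 a
    exact ⟨(x, c), by simp [πB, ha]⟩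
  have hB := isSES_ker hπB
  obtain ⟨f', hf'⟩ := hB.lift (LinearMap.inl R FA FC ∘ₗ iA) (fun x => by
    simp [πB, hA.comp_zero])
  obtain ⟨g', hg'⟩ := hC.lift (LinearMap.snd R FA FC ∘ₗ (LinearMap.ker πB).subtype) (by
    rintro ⟨⟨x, y⟩, hx⟩
    have := congrArg g (LinearMap.mem_ker.1 hx)
    simpa [πB, h.comp_zero, hφ] using this)
  refine ⟨ModuleCat.of R (LinearMap.ker πB), (LinearMap.ker πB).subtype, πB, f', g', hB, ?_,
    fun x => by simp only [hf']; rfl, fun x => by simp only [hg']; rfl,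
    fun x => by simp [πB], fun x => by simp [πB, h.comp_zero, hφ]⟩
  refine IsSES.mk' ?_ ?_ ?_ ?_
  · intro a ha
    apply hA.1
    have := hf' a
    rw [ha] at this
    have := congrArg Prod.fst this
    simpa using this.symm
  · intro c
    obtain ⟨a, ha⟩ := h.exists_pre (-φ (iC c)) (by simp [hφ, hC.comp_zero])
    obtain ⟨x, rfl⟩ := hA.2.1 a
    refine ⟨⟨(x, iC c), by simp [πB, ha]⟩, hC.1 ?_⟩
    rw [hg']
    rfl
  · intro a
    apply hC.1
    rw [hg']
    have := congrArg Prod.snd (hf' a)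
    simpa using this
  · rintro ⟨⟨x, y⟩, hx⟩ h0
    have hy : y = 0 := by
      have := hg' ⟨⟨x, y⟩, hx⟩
      rw [h0] at this
      simpa using this.symm
    subst hy
    have hx' : πA x = 0 := h.1 (by simpa [πB] using hx)
    obtain ⟨a, rfl⟩ := hA.exists_pre x hx'
    refine ⟨a, Subtype.val_injective ?_⟩
    exact hf' a

theorem sp.ext {n : ℕ} {f : A →ₗ[R] B} {g : B →ₗ[R] C} (h : IsSES f g) {s t : R}
    [Module.Finite R A] [Module.Finite R C] (hA : sp n A s) (hC : sp n C t) :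
    sp n B (s * t) := by
  induction n generalizing A B C with
  | zero => exact SP.ext h hA hC
  | succ n ih =>
    obtain ⟨KA, FA, iA, πA, h1, h2, h3⟩ := exists_cover_ses R A
    obtain ⟨KC, FC, iC, πC, h1', h2', h3'⟩ := exists_cover_ses R C
    obtain ⟨KB, iB, πB, f', g', hB, hK, -⟩ := horseshoe h h3 h3'
    have := h3.finite_left
    have := h3'.finite_left
    rw [sp_syz_iff h3] at hA
    rw [sp_syz_iff h3'] at hC
    rw [sp_syz_iff hB]
    exact ih hK hA hC

theorem sp.of_proj {n : ℕ} [Module.Finite R A] [Module.Projective R A] (s : R) : sp n A s := by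
  induction n with
  | zero => exact SP.of_proj s
  | succ n ih => exact ih.mono_succ

theorem sp.mono {n m : ℕ} (hnm : n ≤ m) {s : R} [Module.Finite R A] (h : sp n A s) :
    sp m A s := by
  induction hnm with
  | refl => exact h
  | step _ ih => exact ih.mono_succ

theorem sp.congr {n : ℕ} {s : R} (e : A ≃ₗ[R] B) [Module.Finite R A] (h : sp n A s) :
    sp n B s := by
  have : Module.Finite R B := Module.Finite.equiv e
  simpa using h.retr (t := 1) e.symm.toLinearMap e.toLinearMap (by simp)

/-- `sp` as an ideal -/
def spI (n : ℕ) (A : Type u) [AddCommGroup A] [Module R A] [Module.Finite R A] : Ideal R where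
  carrier := {s | sp n A s}
  add_mem' := sp.add
  zero_mem' := sp.zero
  smul_mem' := fun c x hx => by
    have := sp.smul hx c
    simpa [mul_comm] using this

theorem mem_spI {n : ℕ} [Module.Finite R A] {s : R} : s ∈ spI n A ↔ sp n A s := Iff.rfl

theorem spI_mono {n m : ℕ} (hnm : n ≤ m) [Module.Finite R A] : spI (R := R) n A ≤ spI m A :=
  fun _ h => sp.mono hnm h

end P1

section P2
open CategoryTheory
variable {R : Type u} [CommRing R]
variable {A B C K F M X : Type u}
  [AddCommGroup A] [Module R A] [AddCommGroup B] [Module R B] [AddCommGroup C] [Module R C]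
  [AddCommGroup K] [Module R K] [AddCommGroup F] [Module R F] [AddCommGroup M] [Module R M]
  [AddCommGroup X] [Module R X]

theorem SP_one_iff [Module.Finite R A] : SP A (1 : R) ↔ Module.Projective R A := by
  constructor
  · rintro ⟨P, u, v, h1, h2, h3⟩
    exact Module.Projective.of_split u v (by ext; simp [h3])
  · intro h
    exact SP.of_proj 1

theorem pdLE_iff [IsNoetherianRing R] (n : ℕ) (M : ModuleCat.{u} R) [Module.Finite R M] :
    pdLE R n M ↔ sp n M (1 : R) := by
  induction n generalizing M with
  | zero => exact SP_one_iff.symm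
  | succ n ih =>
    constructor
    · rintro ⟨K, P, f, g, h1, h2, h3, h4⟩
      have := h3.finite_left
      exact ⟨K, P, f, g, h1, h2, h3, (ih K).1 h4⟩
    · rintro ⟨K, P, f, g, h1, h2, h3, h4⟩
      have := h3.finite_left
      exact ⟨K, P, f, g, h1, h2, h3, (ih K).2 h4⟩

theorem pdim_le_iff [IsNoetherianRing R] (n : ℕ) (M : ModuleCat.{u} R) [Module.Finite R M] :
    pdim R M ≤ ((n : ℕ∞) : WithBot ℕ∞) ↔ sp n M (1 : R) := by
  constructor
  · intro h
    have hne : {x : WithBot ℕ∞ | (x = ⊥ ∧ Subsingleton M) ∨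
        ∃ n : ℕ, x = (n : ℕ∞) ∧ pdLE R n M}.Nonempty := by
      by_contra hne
      rw [Set.not_nonempty_iff_eq_empty] at hne
      rw [pdim, hne, sInf_empty, top_le_iff] at h
      have : ((n : ℕ∞) : WithBot ℕ∞) = ((⊤ : ℕ∞) : WithBot ℕ∞) := h
      rw [WithBot.coe_inj] at this
      exact ENat.coe_ne_top n this
    rcases csInf_mem hne with ⟨-, h2⟩ | ⟨m, h1, h2⟩
    · exact sp.of_proj 1
    · rw [pdim, h1] at h
      have : m ≤ n := by exact_mod_cast h
      exact ((pdLE_iff m M).1 h2).mono this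
  · intro h
    exact sInf_le (Or.inr ⟨n, rfl, (pdLE_iff n M).2 h⟩)

theorem isSES_localize (S : Submonoid R) {f : A →ₗ[R] B} {g : B →ₗ[R] C} (h : IsSES f g) :
    IsSES (LocalizedModule.map S f) (LocalizedModule.map S g) := by
  refine ⟨LocalizedModule.map_injective S f h.1, LocalizedModule.map_surjective S g h.2.1, ?_⟩
  have h1 : Function.Exact f g := LinearMap.exact_iff.2 h.2.2.symm
  have := LocalizedModule.map_exact S f g h1
  ext x
  exact (this x).symm

theorem SP.localize (S : Submonoid R) {s : R} (h : SP A s) :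
    SP (R := Localization S) (LocalizedModule S A) (algebraMap R (Localization S) s) := by
  obtain ⟨P, u, v, h1, h2, h3⟩ := h
  refine SP.of_cover (F := LocalizedModule S P) (LocalizedModule.map S v)
    (LocalizedModule.map S u) ?_
  intro a
  induction a using LocalizedModule.induction_on with
  | _ m t =>
    rw [LocalizedModule.map_mk, LocalizedModule.map_mk, h3, algebraMap_smul,
      LocalizedModule.smul'_mk]

theorem sp.localize (S : Submonoid R) {n : ℕ} {s : R} (h : sp n A s) :
    sp (R := Localization S) n (LocalizedModule S A) (algebraMap R (Localization S) s) := by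
  induction n generalizing A with
  | zero => exact SP.localize S h
  | succ n ih =>
    obtain ⟨K, G, f, g, h1, h2, h3, h4⟩ := h
    exact ⟨ModuleCat.of _ (LocalizedModule S K), ModuleCat.of _ (LocalizedModule S G),
      LocalizedModule.map S f, LocalizedModule.map S g,
      inferInstanceAs (Module.Finite (Localization S) (LocalizedModule S G)),
      inferInstanceAs (Module.Projective (Localization S) (LocalizedModule S G)),
      isSES_localize S h3, ih h4⟩

variable [IsNoetherianRing R]

theorem SP_of_localize (S : Submonoid R) [Module.Finite R A]
    (h : SP (R := Localization S) (LocalizedModule S A) 1) : ∃ s ∈ S, SP A s := by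
  obtain ⟨F, π, h1, h2, h3⟩ := exists_cover R A
  obtain ⟨σ, hσ⟩ := h.cover (LocalizedModule.map_surjective S π h3)
  have : Module.FinitePresentation R A := Module.finitePresentation_of_finite R A
  obtain ⟨τ, s, hτ⟩ := Module.FinitePresentation.exists_lift_of_isLocalizedModule S
    (LocalizedModule.mkLinearMap S F) (σ.restrictScalars R ∘ₗ LocalizedModule.mkLinearMap S A)
  have key : (LocalizedModule.mkLinearMap S A).comp (π ∘ₗ τ) =
      (LocalizedModule.mkLinearMap S A).comp ((s : R) • LinearMap.id) := by
    ext a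
    have h4 := LinearMap.congr_fun hτ a
    have h5 := congrArg (LocalizedModule.map S π) h4
    have h6 := hσ (LocalizedModule.mk a 1)
    simp only [LinearMap.comp_apply, LocalizedModule.mkLinearMap_apply, LocalizedModule.map_mk,
      LinearMap.smul_apply, LinearMap.restrictScalars_apply, Submonoid.smul_def] at h5 h6 ⊢
    rw [h5, ← algebraMap_smul (Localization S), map_smul, h6, one_smul]
    simp only [LinearMap.id_apply, algebraMap_smul, LocalizedModule.smul'_mk]
  obtain ⟨t, ht⟩ := Module.Finite.exists_smul_of_comp_eq_of_isLocalizedModule S _ _ _ key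
  refine ⟨t * s, S.mul_mem t.2 s.2, SP.of_cover ((t : R) • π) τ fun a => ?_⟩
  have := LinearMap.congr_fun ht a
  simpa [Submonoid.smul_def, mul_smul] using this

theorem sp_of_localize (S : Submonoid R) {n : ℕ} [Module.Finite R A]
    (h : sp (R := Localization S) n (LocalizedModule S A) 1) : ∃ s ∈ S, sp n A s := by
  have : IsNoetherianRing (Localization S) := IsLocalization.isNoetherianRing S _ inferInstance
  induction n generalizing A with
  | zero => exact SP_of_localize S h
  | succ n ih =>
    obtain ⟨K', G', f', g', h1', h2', h3'⟩ := exists_cover_ses R A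
    have := h3'.finite_left
    rw [sp_syz_iff (isSES_localize S h3')] at h
    obtain ⟨s, hs, h⟩ := ih h
    exact ⟨s, hs, (sp_syz_iff h3').2 h⟩

theorem localPdim_le_iff (q : PrimeSpectrum R) (n : ℕ) (M : ModuleCat.{u} R)
    [Module.Finite R M] :
    localPdim R q M ≤ ((n : ℕ∞) : WithBot ℕ∞) ↔ ¬ spI (R := R) n M ≤ q.asIdeal := by
  have : IsNoetherianRing (Localization.AtPrime q.asIdeal) :=
    IsLocalization.isNoetherianRing q.asIdeal.primeCompl _ inferInstance
  rw [localPdim]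
  refine (pdim_le_iff n _).trans ?_
  rw [SetLike.not_le_iff_exists]
  constructor
  · intro h
    obtain ⟨s, hs, h⟩ := sp_of_localize _ h
    exact ⟨s, h, hs⟩
  · rintro ⟨s, h, hs⟩
    have h2 := sp.localize q.asIdeal.primeCompl (mem_spI.1 h)
    obtain ⟨t, ht⟩ := (IsLocalization.map_units (M := q.asIdeal.primeCompl)
      (Localization.AtPrime q.asIdeal) ⟨s, hs⟩).exists_right_inv
    rw [← ht]
    exact h2.smul t

theorem mem_PDcat_iff (M : ModuleCat.{u} R) [hM : Module.Finite R M] :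
    M ∈ PDcat R ↔ ∃ n, spI (R := R) n M = ⊤ := by
  simp only [PDcat, Set.mem_setOf_eq, hM, true_and]
  refine exists_congr fun n => ?_
  rw [pdLE_iff, Ideal.eq_top_iff_one, mem_spI]

end P2

section P3
open CategoryTheory
variable {R : Type u} [CommRing R]
variable {A B C K F M X : Type u}
  [AddCommGroup A] [Module R A] [AddCommGroup B] [Module R B] [AddCommGroup C] [Module R C]
  [AddCommGroup K] [Module R K] [AddCommGroup F] [Module R F] [AddCommGroup M] [Module R M]
  [AddCommGroup X] [Module R X]

/-- unbundled membership -/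
def Mem (𝒳 : Set (ModuleCat.{u} R)) (A : Type u) [AddCommGroup A] [Module R A] : Prop :=
  ModuleCat.of R A ∈ 𝒳

variable {𝒳 : Set (ModuleCat.{u} R)}

theorem Mem.finite (h𝒳 : IsResolving R 𝒳) (h : Mem 𝒳 A) : Module.Finite R A := h𝒳.fg _ h

theorem Mem.iso (h𝒳 : IsResolving R 𝒳) (h : Mem 𝒳 A) (e : A ≃ₗ[R] B) : Mem 𝒳 B :=
  h𝒳.iso_closed (ModuleCat.of R A) (ModuleCat.of R B) ⟨e⟩ h

theorem mem_proj (h𝒳 : IsResolving R 𝒳) [h1 : Module.Finite R A] [h2 : Module.Projective R A] :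
    Mem 𝒳 A := h𝒳.proj_mem (ModuleCat.of R A) h1 h2

theorem Mem.ext (h𝒳 : IsResolving R 𝒳) {f : A →ₗ[R] B} {g : B →ₗ[R] C} (h : IsSES f g)
    (hA : Mem 𝒳 A) (hC : Mem 𝒳 C) : Mem 𝒳 B :=
  h𝒳.ext_closed (ModuleCat.of R A) (ModuleCat.of R B) (ModuleCat.of R C) f g h hA hC

theorem isSES_inl_snd : IsSES (LinearMap.inl R A B) (LinearMap.snd R A B) := by
  refine IsSES.mk' ?_ LinearMap.snd_surjective ?_ ?_
  · intro a h; simpa using h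
  · intro a; simp
  · rintro ⟨a, b⟩ h
    exact ⟨a, by simpa using h.symm⟩

theorem Mem.prod (h𝒳 : IsResolving R 𝒳) (hA : Mem 𝒳 A) (hB : Mem 𝒳 B) : Mem 𝒳 (A × B) :=
  hA.ext h𝒳 isSES_inl_snd hB

theorem Mem.fst (h𝒳 : IsResolving R 𝒳) (h : Mem 𝒳 (A × B)) : Mem 𝒳 A :=
  h𝒳.summand_closed (ModuleCat.of R A) (ModuleCat.of R B) h

theorem Mem.retr (h𝒳 : IsResolving R 𝒳) (h : Mem 𝒳 B) (a : A →ₗ[R] B) (b : B →ₗ[R] A)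
    (hab : ∀ x, b (a x) = x) : Mem 𝒳 A := by
  have e : B ≃ₗ[R] A × LinearMap.ker b := LinearEquiv.ofLinearMap
    (b.prod ((LinearMap.id - a ∘ₗ b).codRestrict (LinearMap.ker b) (fun x => by simp [hab])))
    (a.coprod (LinearMap.ker b).subtype)
    (by
      ext x
      · simp [hab]
      · simp [hab]
      · simp
      · simp)
    (by
      ext x
      simp)
  exact (h.iso h𝒳 e).fst h𝒳

variable [IsNoetherianRing R]

theorem Mem.syz (h𝒳 : IsResolving R 𝒳) {f : K →ₗ[R] F} {g : F →ₗ[R] M} (h : IsSES f g)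
    [h1 : Module.Finite R F] [h2 : Module.Projective R F] (hM : Mem 𝒳 M) : Mem 𝒳 K :=
  h𝒳.syzygy_closed (ModuleCat.of R K) (ModuleCat.of R F) (ModuleCat.of R M) f g h
    h.finite_left h1 h2 hM

theorem Mem.ker (h𝒳 : IsResolving R 𝒳) {f : A →ₗ[R] B} {g : B →ₗ[R] C} (h : IsSES f g)
    (hB : Mem 𝒳 B) (hC : Mem 𝒳 C) : Mem 𝒳 A := by
  have := hC.finite h𝒳
  obtain ⟨K, F, i, π, h1, h2, h3⟩ := exists_cover_ses R C
  obtain ⟨φ, hφ⟩ := proj_lift h.2.1 π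
  obtain ⟨r, hr⟩ := h.lift (φ ∘ₗ i) (fun x => by simp [hφ, h3.comp_zero])
  have hK : Mem 𝒳 K := hC.syz h𝒳 h3
  have : IsSES (r.prod (-i)) (f.coprod φ) := by
    refine IsSES.mk' ?_ ?_ ?_ ?_
    · intro a ha
      apply h3.1
      simpa using congrArg Prod.snd ha
    · intro b
      obtain ⟨x, hx⟩ := h3.2.1 (g b)
      obtain ⟨a, ha⟩ := h.exists_pre (b - φ x) (by simp [hφ, hx])
      exact ⟨(a, x), by simp [ha]⟩
    · intro a
      simp [hr]
    · rintro ⟨a, x⟩ h0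
      simp only [LinearMap.coprod_apply] at h0
      have h4 : π x = 0 := by
        have := congrArg g h0
        simpa [h.comp_zero, hφ] using this
      obtain ⟨k, rfl⟩ := h3.exists_pre x h4
      refine ⟨-k, ?_⟩
      ext
      · apply h.1
        have h5 : f (r k) = φ (i k) := hr k
        simpa [neg_eq_iff_add_eq_zero, add_comm, h5] using h0
      · simp
  exact (hK.ext h𝒳 this hB).fst h𝒳

theorem mem_psiPd {f : PrimeSpectrum R → ℕ} {M : ModuleCat.{u} R} :
    M ∈ psiPd R f ↔ Module.Finite R M ∧ ∀ p : PrimeSpectrum R, ∃ s ∉ p.asIdeal, sp (f p) M s := by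
  constructor
  · rintro ⟨h1, h2⟩
    refine ⟨h1, fun p => ?_⟩
    have := (localPdim_le_iff p (f p) M).1 (h2 p)
    obtain ⟨s, h3, h4⟩ := SetLike.not_le_iff_exists.1 this
    exact ⟨s, h4, h3⟩
  · rintro ⟨h1, h2⟩
    refine ⟨h1, fun p => (localPdim_le_iff p (f p) M).2 ?_⟩
    obtain ⟨s, h3, h4⟩ := h2 p
    exact SetLike.not_le_iff_exists.2 ⟨s, h4, h3⟩

theorem psiPd_resolving (f : PrimeSpectrum R → ℕ) : IsResolving R (psiPd R f) where
  fg := fun M hM => hM.1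
  iso_closed := by
    rintro M N ⟨e⟩ h
    rw [mem_psiPd] at h ⊢
    obtain ⟨h1, h2⟩ := h
    refine ⟨Module.Finite.equiv e, fun p => ?_⟩
    obtain ⟨s, hs, h⟩ := h2 p
    exact ⟨s, hs, h.congr e⟩
  proj_mem := by
    intro M h1 h2
    rw [mem_psiPd]
    exact ⟨h1, fun p => ⟨1, (Ideal.ne_top_iff_one _).1 p.2.ne_top, sp.of_proj 1⟩⟩
  summand_closed := by
    intro M N h
    rw [mem_psiPd] at h ⊢
    obtain ⟨h1, h2⟩ := h
    have h1' : Module.Finite R (M × N) := h1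
    have h3 : Module.Finite R M := Module.Finite.of_surjective (LinearMap.fst R M N)
      LinearMap.fst_surjective
    refine ⟨h3, fun p => ?_⟩
    obtain ⟨s, hs, h⟩ := h2 p
    have h' : sp (f p) (M × N) s := h
    refine ⟨s, hs, ?_⟩
    simpa using h'.retr (t := 1) (LinearMap.inl R M N) (LinearMap.fst R M N) (by simp)
  ext_closed := by
    intro A B C i g h hA hC
    rw [mem_psiPd] at hA hC ⊢
    obtain ⟨h1, h2⟩ := hA
    obtain ⟨h1', h2'⟩ := hC
    refine ⟨h.finite_mid, fun p => ?_⟩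
    obtain ⟨s, hs, h3⟩ := h2 p
    obtain ⟨s', hs', h3'⟩ := h2' p
    exact ⟨s * s', fun h => (p.2.mem_or_mem h).elim hs hs', h3.ext h h3'⟩
  syzygy_closed := by
    intro K P M i g h h1 h2 h3 hM
    rw [mem_psiPd] at hM ⊢
    obtain ⟨h4, h5⟩ := hM
    refine ⟨h1, fun p => ?_⟩
    obtain ⟨s, hs, h6⟩ := h5 p
    exact ⟨s, hs, h6.mono_succ.syz h⟩

theorem psiPd_subset (f : PrimeSpectrum R → ℕ) : psiPd R f ⊆ PDcat R := by
  intro M hM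
  rw [mem_psiPd] at hM
  obtain ⟨h1, h2⟩ := hM
  rw [mem_PDcat_iff]
  let a : ℕ →o Ideal R := ⟨fun n => spI n M, fun _ _ h => spI_mono h⟩
  obtain ⟨n, hn⟩ := monotone_stabilizes_iff_noetherian.2 ‹IsNoetherianRing R› a
  refine ⟨n, ?_⟩
  by_contra hne
  obtain ⟨m, hm, hle⟩ := Ideal.exists_le_maximal _ hne
  obtain ⟨s, hs, h⟩ := h2 ⟨m, hm.isPrime⟩
  apply hs
  apply hle
  rcases le_total n (f ⟨m, hm.isPrime⟩) with h' | h'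
  · have := hn _ h'
    change a n ≤ m at hle
    change s ∈ a n
    rw [this]
    exact h
  · exact spI_mono h' h

end P3

section P4
open CategoryTheory
open CategoryTheory.Abelian
variable {R : Type u} [CommRing R]
variable {A B C K F M X : Type u}
  [AddCommGroup A] [Module R A] [AddCommGroup B] [Module R B] [AddCommGroup C] [Module R C]
  [AddCommGroup K] [Module R K] [AddCommGroup F] [Module R F] [AddCommGroup M] [Module R M]
  [AddCommGroup X] [Module R X]

/-- `Ext^n(N, R) = 0` -/
def EZ (R : Type u) [CommRing R] (n : ℕ) (N : Type u) [AddCommGroup N] [Module R N] : Prop :=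
  Subsingleton (Ext (ModuleCat.of R N) (ModuleCat.of R R) n)

theorem IsSES.shortExact {f : A →ₗ[R] B} {g : B →ₗ[R] C} (h : IsSES f g) :
    ∃ w, (ShortComplex.mk (ModuleCat.ofHom f) (ModuleCat.ofHom g) w).ShortExact := by
  have w : ModuleCat.ofHom f ≫ ModuleCat.ofHom g = 0 := by
    ext x
    simp [h.comp_zero]
  exact ⟨w, ModuleCat.shortComplex_shortExact _ (LinearMap.exact_iff.2 h.2.2.symm) h.1 h.2.1⟩

theorem EZ.hom (h : EZ R 0 M) (χ : M →ₗ[R] R) : χ = 0 := by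
  have h' : Subsingleton (Ext (ModuleCat.of R M) (ModuleCat.of R R) 0) := h
  have := Ext.addEquiv₀.symm.injective
    (h'.elim (Ext.addEquiv₀.symm (ModuleCat.ofHom χ)) (Ext.addEquiv₀.symm (ModuleCat.ofHom 0)))
  exact congrArg ModuleCat.Hom.hom this

theorem EZ.extend {f : A →ₗ[R] B} {g : B →ₗ[R] C} (h : IsSES f g) (h1 : EZ R 1 C)
    (χ : A →ₗ[R] R) : ∃ ψ : B →ₗ[R] R, ∀ a, ψ (f a) = χ a := by
  obtain ⟨w, hS⟩ := h.shortExact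
  have h' : Subsingleton (Ext (ModuleCat.of R C) (ModuleCat.of R R) 1) := h1
  obtain ⟨x₂, hx⟩ := Ext.contravariant_sequence_exact₁ hS (ModuleCat.of R R)
    (Ext.mk₀ (ModuleCat.ofHom χ)) (n₁ := 1) rfl (h'.elim _ _)
  obtain ⟨ψ, rfl⟩ := Ext.addEquiv₀.symm.surjective x₂
  simp only [Ext.addEquiv₀_symm_apply] at hx
  rw [Ext.mk₀_comp_mk₀] at hx
  have := Ext.addEquiv₀.symm.injective (a₁ := ModuleCat.ofHom f ≫ ψ)
    (a₂ := ModuleCat.ofHom χ) (by simpa using hx)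
  refine ⟨ψ.hom, fun a => ?_⟩
  have := congrArg (fun z => z.hom a) this
  simpa using this

theorem EZ.syz {i : K →ₗ[R] F} {π : F →ₗ[R] M} (h : IsSES i π) [Module.Projective R F] {n : ℕ}
    (h1 : EZ R (n+2) M) : EZ R (n+1) K := by
  obtain ⟨w, hS⟩ := h.shortExact
  have h' : Subsingleton (Ext (ModuleCat.of R M) (ModuleCat.of R R) (n+2)) := h1
  have : Projective (ModuleCat.of R F) := (IsProjective.iff_projective F).1 inferInstance
  refine ⟨fun x y => ?_⟩
  suffices H : ∀ x : Ext (ModuleCat.of R K) (ModuleCat.of R R) (n+1), x = 0 by rw [H x, H y]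
  intro x
  obtain ⟨x₂, hx⟩ := Ext.contravariant_sequence_exact₁ hS (ModuleCat.of R R) x
    (n₁ := n+2) (by omega) (h'.elim _ _)
  have hz : x₂ = 0 := Ext.eq_zero_of_projective (P := ModuleCat.of R F) x₂
  rw [← hx, hz, Ext.comp_zero]

theorem EZ.ext {f : A →ₗ[R] B} {g : B →ₗ[R] C} (h : IsSES f g) {n : ℕ} (hA : EZ R n A)
    (hC : EZ R n C) : EZ R n B := by
  obtain ⟨w, hS⟩ := h.shortExact
  have hA' : Subsingleton (Ext (ModuleCat.of R A) (ModuleCat.of R R) n) := hA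
  have hC' : Subsingleton (Ext (ModuleCat.of R C) (ModuleCat.of R R) n) := hC
  refine ⟨fun x y => ?_⟩
  suffices H : ∀ x : Ext (ModuleCat.of R B) (ModuleCat.of R R) n, x = 0 by rw [H x, H y]
  intro x
  obtain ⟨x₂, hx⟩ := Ext.contravariant_sequence_exact₂ hS (ModuleCat.of R R) x (hA'.elim _ _)
  have hz : x₂ = 0 := hC'.elim x₂ 0
  rw [← hx, hz, Ext.comp_zero]

theorem EZ.of_subsingleton [Subsingleton M] {n : ℕ} : EZ R n M := by
  have hz : Limits.IsZero (ModuleCat.of R M) := ModuleCat.isZero_of_subsingleton _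
  refine ⟨fun x y => ?_⟩
  suffices H : ∀ x : Ext (ModuleCat.of R M) (ModuleCat.of R R) n, x = 0 by rw [H x, H y]
  intro x
  rw [← Ext.mk₀_id_comp x, hz.eq_of_src (𝟙 _) 0, Ext.mk₀_zero, Ext.zero_comp]

theorem EZ.congr (e : A ≃ₗ[R] B) {n : ℕ} (hA : EZ R n A) : EZ R n B := by
  have : IsSES e.toLinearMap (0 : B →ₗ[R] PUnit.{u+1}) := by
    refine IsSES.mk' (by simp) (fun x => ⟨0, rfl⟩) (by simp) fun b _ => ⟨e.symm b, by simp⟩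
  exact hA.ext this EZ.of_subsingleton

theorem exists_rs_of_grade {I : Ideal R} {n : ℕ} (h : (n : ℕ∞) ≤ gradeE R I) :
    ∃ rs : List R, (∀ r ∈ rs, r ∈ I) ∧ RingTheory.Sequence.IsWeaklyRegular R rs ∧
      n ≤ rs.length := by
  by_contra hne
  push Not at hne
  cases n with
  | zero => exact absurd (hne [] (by simp) (by simp)) (by simp)
  | succ n =>
    have : gradeE R I ≤ n := by
      apply sSup_le
      rintro x ⟨rs, h1, h2, rfl⟩
      have := hne rs h1 h2
      exact_mod_cast Nat.lt_succ_iff.1 this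
    have := h.trans this
    norm_cast at this
    omega

theorem EZ.of_grade [IsNoetherianRing R] {p : Ideal R} [hp : p.IsPrime] {n : ℕ}
    (h : ((n+1 : ℕ) : ℕ∞) ≤ gradeE R p) {j : ℕ} (hj : j ≤ n) : EZ R j (R ⧸ p) := by
  obtain ⟨rs, h1, h2, h3⟩ := exists_rs_of_grade h
  have hlt : p • (⊤ : Submodule R R) < ⊤ := by
    rw [lt_top_iff_ne_top]
    simpa using hp.ne_top
  refine ModuleCat.subsingleton_ext_of_exists_isRegular p (ModuleCat.of R (R ⧸ p)) ?_
    (ModuleCat.of R R) hlt rs h1 ⟨h2, ?_⟩ j (by omega)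
  · change Module.support R (R ⧸ p) ⊆ _
    rw [Module.support_eq_zeroLocus, Ideal.annihilator_quotient]
  · intro htop
    have : Ideal.ofList rs • (⊤ : Submodule R R) ≤ p • ⊤ :=
      Submodule.smul_mono_left (Ideal.span_le.2 h1)
    exact hlt.ne (top_le_iff.1 (le_trans (le_of_eq htop) this))

end P4

section P5
open CategoryTheory
variable {R : Type u} [CommRing R]
variable {A B C K F M N Q X : Type u}
  [AddCommGroup A] [Module R A] [AddCommGroup B] [Module R B] [AddCommGroup C] [Module R C]
  [AddCommGroup K] [Module R K] [AddCommGroup F] [Module R F] [AddCommGroup M] [Module R M]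
  [AddCommGroup X] [Module R X] [AddCommGroup N] [Module R N] [AddCommGroup Q] [Module R Q]

/-- right exact sequences -/
structure RExact (d : A →ₗ[R] B) (e : B →ₗ[R] C) : Prop where
  surj : Function.Surjective e
  zero : ∀ a, e (d a) = 0
  pre : ∀ b, e b = 0 → ∃ a, d a = b

theorem RExact.lift {d : A →ₗ[R] B} {e : B →ₗ[R] C} (h : RExact d e) [Module.Projective R X]
    (u : X →ₗ[R] B) (hu : ∀ x, e (u x) = 0) : ∃ v : X →ₗ[R] A, ∀ x, d (v x) = u x := by
  obtain ⟨v, hv⟩ := proj_lift (d.surjective_rangeRestrict)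
    (u.codRestrict (LinearMap.range d) fun x => h.pre _ (hu x))
  exact ⟨v, fun x => congrArg Subtype.val (hv x)⟩

theorem RExact.desc {d : A →ₗ[R] B} {e : B →ₗ[R] C} (h : RExact d e)
    (u : B →ₗ[R] X) (hu : ∀ x, u (d x) = 0) : ∃ v : C →ₗ[R] X, ∀ x, v (e x) = u x := by
  have h' : IsSES (LinearMap.ker e).subtype e := isSES_ker h.surj
  refine h'.desc u ?_
  rintro ⟨b, hb⟩
  obtain ⟨a, rfl⟩ := h.pre b hb
  exact hu a

theorem RExact.of_ses {f : A →ₗ[R] B} {g : B →ₗ[R] C} (h : IsSES f g) : RExact f g :=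
  ⟨h.2.1, h.comp_zero, h.exists_pre⟩

theorem rexact_mkQ (d : A →ₗ[R] B) : RExact d (LinearMap.range d).mkQ :=
  ⟨Submodule.mkQ_surjective _, fun a => by simp, fun b hb => by simpa using hb⟩

theorem RExact.comp {i : K →ₗ[R] B} {e : B →ₗ[R] C} (h : IsSES i e) {q : A →ₗ[R] K}
    (hq : Function.Surjective q) : RExact (i ∘ₗ q) e := by
  refine ⟨h.2.1, fun a => h.comp_zero _, fun b hb => ?_⟩
  obtain ⟨k, rfl⟩ := h.exists_pre b hb
  obtain ⟨a, rfl⟩ := hq k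
  exact ⟨a, rfl⟩

/-- `Q` is a transpose of the `n`-th syzygy of `N` -/
def IsQ : ∀ (_ : ℕ) (N Q : Type u) [AddCommGroup N] [Module R N] [AddCommGroup Q] [Module R Q],
    Prop
  | 0, N, Q, _, _, _, _ => ∃ (G1 G0 : ModuleCat.{u} R) (d : G1 →ₗ[R] G0) (e : G0 →ₗ[R] N)
      (π : Module.Dual R G1 →ₗ[R] Q), Module.Finite R G1 ∧ Module.Projective R G1 ∧
      Module.Finite R G0 ∧ Module.Projective R G0 ∧ RExact d e ∧ RExact d.dualMap π
  | n+1, N, Q, _, _, _, _ => ∃ (K G : ModuleCat.{u} R) (i : K →ₗ[R] G) (π : G →ₗ[R] N),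
      Module.Finite R G ∧ Module.Projective R G ∧ IsSES i π ∧ IsQ n K Q

theorem IsQ.mk0 {G1 G0 : Type u} [AddCommGroup G1] [Module R G1] [AddCommGroup G0] [Module R G0]
    [h1 : Module.Finite R G1] [h2 : Module.Projective R G1] [h3 : Module.Finite R G0]
    [h4 : Module.Projective R G0] {d : G1 →ₗ[R] G0} {e : G0 →ₗ[R] N}
    {π : Module.Dual R G1 →ₗ[R] Q} (h : RExact d e) (h' : RExact d.dualMap π) :
    IsQ (R := R) 0 N Q :=
  ⟨ModuleCat.of R G1, ModuleCat.of R G0, d, e, π, h1, h2, h3, h4, h, h'⟩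

theorem IsQ.mk_succ {G : Type u} [AddCommGroup G] [Module R G]
    [h1 : Module.Finite R G] [h2 : Module.Projective R G] {n : ℕ}
    {i : K →ₗ[R] G} {π : G →ₗ[R] N} (h : IsSES i π) (h' : IsQ (R := R) n K Q) :
    IsQ (R := R) (n+1) N Q :=
  ⟨ModuleCat.of R K, ModuleCat.of R G, i, π, h1, h2, h, h'⟩

theorem IsQ.finite {n : ℕ} (h : IsQ (R := R) n N Q) : Module.Finite R Q := by
  induction n generalizing N with
  | zero =>
    obtain ⟨G1, G0, d, e, π, h1, h2, h3, h4, h, h'⟩ := h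
    exact Module.Finite.of_surjective π h'.surj
  | succ n ih =>
    obtain ⟨K, G, i, π, h1, h2, h3, h4⟩ := h
    exact ih h4

theorem IsQ.prod {n : ℕ} (h : IsQ (R := R) n N Q) [Module.Finite R F] [Module.Projective R F] :
    IsQ (R := R) n (N × F) Q := by
  cases n with
  | zero =>
    obtain ⟨G1, G0, d, e, π, h1, h2, h3, h4, h, h'⟩ := h
    refine IsQ.mk0 (G0 := G0 × F) (d := LinearMap.inl R G0 F ∘ₗ d)
      (e := e.prodMap LinearMap.id) (π := π) ⟨?_, ?_, ?_⟩ ⟨h'.surj, ?_, ?_⟩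
    · rintro ⟨c, x⟩
      obtain ⟨b, rfl⟩ := h.surj c
      exact ⟨(b, x), rfl⟩
    · intro a
      simp [h.zero]
    · rintro ⟨b, x⟩ hx
      simp at hx
      obtain ⟨a, rfl⟩ := h.pre b hx.1
      exact ⟨a, by simp [hx.2]⟩
    · intro φ
      exact h'.zero (φ ∘ₗ LinearMap.inl R G0 F)
    · intro φ hφ
      obtain ⟨ψ, rfl⟩ := h'.pre φ hφ
      refine ⟨ψ ∘ₗ LinearMap.fst R G0 F, ?_⟩
      ext x
      simp
  | succ n =>
    obtain ⟨K, G, i, π, h1, h2, h3, h4⟩ := h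
    exact IsQ.mk_succ h3.prodF h4

theorem retrS0 {N' Q' : Type u} [AddCommGroup N'] [Module R N'] [AddCommGroup Q'] [Module R Q']
    (h : IsQ (R := R) 0 N Q) (h' : IsQ (R := R) 0 N' Q') (a : N →ₗ[R] N') (b : N' →ₗ[R] N)
    {s : R} (hab : ∀ x, b (a x) = s • x) :
    ∃ (P : ModuleCat.{u} R) (u : Q →ₗ[R] Q' × P) (v : Q' × P →ₗ[R] Q), Module.Finite R P ∧
      Module.Projective R P ∧ ∀ x, v (u x) = s • x := by
  obtain ⟨G1, G0, d, e, π, _, _, _, _, h, hπ⟩ := h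
  obtain ⟨G1', G0', d', e', π', _, _, _, _, h', hπ'⟩ := h'
  obtain ⟨a0, ha0⟩ := proj_lift h'.surj (a ∘ₗ e)
  obtain ⟨b0, hb0⟩ := proj_lift h.surj (b ∘ₗ e')
  obtain ⟨a1, ha1⟩ := h'.lift (a0 ∘ₗ d) (fun x => by simp [ha0, h.zero])
  obtain ⟨b1, hb1⟩ := h.lift (b0 ∘ₗ d') (fun x => by simp [hb0, h'.zero])
  obtain ⟨w, hw⟩ := h.lift (b0 ∘ₗ a0 - s • LinearMap.id) (fun x => by
    simp [ha0, hb0, hab])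
  obtain ⟨A, hA⟩ := hπ'.desc (π ∘ₗ a1.dualMap) (fun φ => by
    have : a1.dualMap (d'.dualMap φ) = d.dualMap (a0.dualMap φ) := by
      ext x
      simp [ha1]
    simp only [LinearMap.comp_apply, this, hπ.zero])
  obtain ⟨B, hB⟩ := hπ.desc (π' ∘ₗ b1.dualMap) (fun φ => by
    have : b1.dualMap (d.dualMap φ) = d'.dualMap (b0.dualMap φ) := by
      ext x
      simp [hb1]
    simp only [LinearMap.comp_apply, this, hπ'.zero])
  let v := b1 ∘ₗ a1 - s • LinearMap.id - w ∘ₗ d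
  have hv : ∀ x, d (v x) = 0 := by
    intro x
    simp [v, hb1, ha1, hw]
  obtain ⟨V, hV⟩ := hπ.desc v.dualMap (fun φ => by
    ext x
    simp [hv])
  refine ⟨ModuleCat.of R (Module.Dual R G1), B.prod V, A.coprod (-π),
    inferInstanceAs (Module.Finite R (Module.Dual R G1)),
    inferInstanceAs (Module.Projective R (Module.Dual R G1)), fun x => ?_⟩
  obtain ⟨φ, rfl⟩ := hπ.surj x
  have : a1.dualMap (b1.dualMap φ) = s • φ + d.dualMap (w.dualMap φ) + v.dualMap φ := by
    ext x
    simp [v]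
  have h2 : π (a1.dualMap (b1.dualMap φ)) = s • π φ + π (v.dualMap φ) := by
    rw [this, map_add, map_add, hπ.zero, add_zero, map_smul]
  have h3 : A (B (π φ)) = π (a1.dualMap (b1.dualMap φ)) := by
    rw [hB, LinearMap.comp_apply, hA, LinearMap.comp_apply]
  change A (B (π φ)) + (-π) (V (π φ)) = _
  rw [h3, h2, hV, LinearMap.neg_apply]
  abel

theorem retrS {n : ℕ} {N' Q' : Type u} [AddCommGroup N'] [Module R N'] [AddCommGroup Q']
    [Module R Q'] (h : IsQ (R := R) n N Q) (h' : IsQ (R := R) n N' Q') (a : N →ₗ[R] N')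
    (b : N' →ₗ[R] N) {s : R} (hab : ∀ x, b (a x) = s • x) :
    ∃ (P : ModuleCat.{u} R) (u : Q →ₗ[R] Q' × P) (v : Q' × P →ₗ[R] Q), Module.Finite R P ∧
      Module.Projective R P ∧ ∀ x, v (u x) = s • x := by
  induction n generalizing N N' with
  | zero => exact retrS0 h h' a b hab
  | succ n ih =>
    obtain ⟨K, G, i, π, h1, h2, h3, h4⟩ := h
    obtain ⟨K', G', i', π', h1', h2', h3', h4'⟩ := h'
    obtain ⟨a', b', hab'⟩ := retr_syz h3 h3' a b hab
    exact ih h4 (h4'.prod (F := G)) a' b' hab'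

variable [IsNoetherianRing R]

theorem exists_IsQ (n : ℕ) (N : Type u) [AddCommGroup N] [Module R N] [Module.Finite R N] :
    ∃ Q : ModuleCat.{u} R, IsQ (R := R) n N Q := by
  induction n generalizing N with
  | zero =>
    obtain ⟨K, F, i, π, h1, h2, h3⟩ := exists_cover_ses R N
    have := h3.finite_left
    obtain ⟨F', q, h1', h2', h3'⟩ := exists_cover R K
    exact ⟨ModuleCat.of R (Module.Dual R F' ⧸ LinearMap.range (i ∘ₗ q).dualMap),
      IsQ.mk0 (RExact.comp h3 h3') (rexact_mkQ _)⟩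
  | succ n ih =>
    obtain ⟨K, F, i, π, h1, h2, h3⟩ := exists_cover_ses R N
    have := h3.finite_left
    obtain ⟨Q, hQ⟩ := ih K
    exact ⟨Q, IsQ.mk_succ h3 hQ⟩

/-- `T n N`: the transpose of the `n`-th syzygy of `N` is in `𝒳` -/
def TT (𝒳 : Set (ModuleCat.{u} R)) (n : ℕ) (N : Type u) [AddCommGroup N] [Module R N] : Prop :=
  ∃ Q : ModuleCat.{u} R, Mem 𝒳 Q ∧ IsQ (R := R) n N Q

variable {𝒳 : Set (ModuleCat.{u} R)}

theorem TT.mem (h𝒳 : IsResolving R 𝒳) {n : ℕ} {N' : Type u} [AddCommGroup N'] [Module R N']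
    (hT : TT 𝒳 n N') (h : IsQ (R := R) n N Q) (a : N →ₗ[R] N')
    (b : N' →ₗ[R] N) (hab : ∀ x, b (a x) = x) : Mem 𝒳 Q := by
  obtain ⟨Q', h1, h2⟩ := hT
  obtain ⟨P, u, v, _, _, h5⟩ := retrS h h2 a b (s := 1) (by simpa using hab)
  have : Mem 𝒳 (Q' × P) := h1.prod h𝒳 (mem_proj h𝒳)
  exact this.retr h𝒳 u v (by simpa using h5)

theorem TT.all (h𝒳 : IsResolving R 𝒳) {n : ℕ} (hT : TT 𝒳 n N) (h : IsQ (R := R) n N Q) :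
    Mem 𝒳 Q := hT.mem h𝒳 h LinearMap.id LinearMap.id (by simp)

theorem TT.retr (h𝒳 : IsResolving R 𝒳) {n : ℕ} {N' : Type u} [AddCommGroup N'] [Module R N']
    [Module.Finite R N] (hT : TT 𝒳 n N') (a : N →ₗ[R] N')
    (b : N' →ₗ[R] N) (hab : ∀ x, b (a x) = x) : TT 𝒳 n N := by
  obtain ⟨Q, hQ⟩ := exists_IsQ (R := R) n N
  exact ⟨Q, hT.mem h𝒳 hQ a b hab, hQ⟩

theorem TT.of_syz {n : ℕ} {i : K →ₗ[R] F} {π : F →ₗ[R] N} (h : IsSES i π) [Module.Finite R F]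
    [Module.Projective R F] (hT : TT 𝒳 n K) : TT 𝒳 (n+1) N := by
  obtain ⟨Q, h1, h2⟩ := hT
  exact ⟨Q, h1, IsQ.mk_succ h h2⟩

theorem TT.syz (h𝒳 : IsResolving R 𝒳) {n : ℕ} {i : K →ₗ[R] F} {π : F →ₗ[R] N} (h : IsSES i π)
    [Module.Finite R F] [Module.Projective R F] (hT : TT 𝒳 (n+1) N) : TT 𝒳 n K := by
  have := h.finite_left
  obtain ⟨Q, hQ⟩ := exists_IsQ (R := R) n K
  exact ⟨Q, hT.all h𝒳 (IsQ.mk_succ h hQ), hQ⟩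

theorem isQ_proj {n : ℕ} [Module.Finite R F] [Module.Projective R F] :
    IsQ (R := R) n F (PUnit.{u+1}) := by
  induction n generalizing F with
  | zero =>
    refine IsQ.mk0 (G1 := PUnit.{u+1}) (G0 := F) (d := 0) (e := LinearMap.id) (π := 0)
      ⟨Function.surjective_id, by simp, fun b hb => ⟨0, by simpa using hb.symm⟩⟩
      ⟨fun x => ⟨0, rfl⟩, by simp, fun b _ => ⟨0, ?_⟩⟩
    ext x
    have : x = 0 := rfl
    rw [this, map_zero, map_zero]
  | succ n ih =>
    refine IsQ.mk_succ (G := F) (K := PUnit.{u+1}) (i := 0) (π := LinearMap.id)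
      (IsSES.mk' (fun _ _ => rfl) Function.surjective_id (by simp)
      fun b hb => ⟨0, by simpa using hb.symm⟩) (ih (F := PUnit.{u+1}))

theorem TT.proj (h𝒳 : IsResolving R 𝒳) {n : ℕ} [Module.Finite R F] [Module.Projective R F] :
    TT 𝒳 n F := ⟨ModuleCat.of R PUnit.{u+1}, mem_proj h𝒳 (A := PUnit.{u+1}), isQ_proj⟩

/-- double dual -/
theorem IsQ.symm (h : IsQ (R := R) 0 M C) : IsQ (R := R) 0 C M := by
  obtain ⟨G1, G0, d, e, π, _, _, _, _, h, hπ⟩ := h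
  refine IsQ.mk0 hπ (π := e ∘ₗ (Module.evalEquiv R G0).symm.toLinearMap) ⟨?_, ?_, ?_⟩
  · exact h.surj.comp (Module.evalEquiv R G0).symm.surjective
  · intro φ
    obtain ⟨x, rfl⟩ := (Module.evalEquiv R G1).surjective φ
    have : d.dualMap.dualMap (Module.evalEquiv R G1 x) = Module.evalEquiv R G0 (d x) := by
      ext ψ
      simp
    simp only [this, LinearMap.comp_apply, LinearEquiv.coe_coe, LinearEquiv.symm_apply_apply,
      h.zero]
  · intro φ hφ
    obtain ⟨x, rfl⟩ := (Module.evalEquiv R G0).surjective φ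
    obtain ⟨y, rfl⟩ := h.pre x (by
      simpa only [LinearMap.comp_apply, LinearEquiv.coe_coe, LinearEquiv.symm_apply_apply]
        using hφ)
    refine ⟨Module.evalEquiv R G1 y, ?_⟩
    ext ψ
    simp

theorem Mem.TT (h : Mem 𝒳 M) (h1 : IsQ (R := R) 0 M C) : TT 𝒳 0 C :=
  ⟨ModuleCat.of R M, h, h1.symm⟩

theorem TT.mem0 (h𝒳 : IsResolving R 𝒳) (h1 : IsQ (R := R) 0 M C) (h : ResolvPaper.TT 𝒳 0 C) :
    Mem 𝒳 M := h.all h𝒳 h1.symm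

end P5

section P6
open CategoryTheory
variable {R : Type u} [CommRing R]
variable {A B C K F M N Q X N' N'' Q' Q'' : Type u}
  [AddCommGroup A] [Module R A] [AddCommGroup B] [Module R B] [AddCommGroup C] [Module R C]
  [AddCommGroup K] [Module R K] [AddCommGroup F] [Module R F] [AddCommGroup M] [Module R M]
  [AddCommGroup X] [Module R X] [AddCommGroup N] [Module R N] [AddCommGroup Q] [Module R Q]
  [AddCommGroup N'] [Module R N'] [AddCommGroup Q'] [Module R Q']
  [AddCommGroup N''] [Module R N''] [AddCommGroup Q''] [Module R Q'']

theorem ses0 {f : N' →ₗ[R] N} {g : N →ₗ[R] N''} (h : IsSES f g)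
    (hext : ∀ χ : N' →ₗ[R] R, ∃ ψ : N →ₗ[R] R, ∀ x, ψ (f x) = χ x)
    (h' : IsQ (R := R) 0 N' Q') (h'' : IsQ (R := R) 0 N'' Q'') :
    ∃ (Q : ModuleCat.{u} R) (a : Q'' →ₗ[R] Q) (b : Q →ₗ[R] Q'), IsQ (R := R) 0 N Q ∧
      IsSES a b := by
  obtain ⟨G1', G0', d', e', π', _, _, _, _, h', hπ'⟩ := h'
  obtain ⟨G1'', G0'', d'', e'', π'', _, _, _, _, h'', hπ''⟩ := h''
  obtain ⟨φ, hφ⟩ := proj_lift h.2.1 e''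
  obtain ⟨θ0, hθ0⟩ := h.lift (-(φ ∘ₗ d'')) (fun x => by simp [hφ, h''.zero])
  obtain ⟨θ, hθ⟩ := proj_lift h'.surj θ0
  let d : (G1' × G1'') →ₗ[R] (G0' × G0'') :=
    ((d' ∘ₗ LinearMap.fst R _ _) + θ ∘ₗ LinearMap.snd R _ _).prod (d'' ∘ₗ LinearMap.snd R _ _)
  let e : (G0' × G0'') →ₗ[R] N := (f ∘ₗ e').coprod φ
  have hd : ∀ x y, d (x, y) = (d' x + θ y, d'' y) := fun x y => rfl
  have he : ∀ x y, e (x, y) = f (e' x) + φ y := fun x y => rfl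
  have hex : RExact d e := by
    refine ⟨?_, ?_, ?_⟩
    · intro b
      obtain ⟨y, hy⟩ := h''.surj (g b)
      obtain ⟨a, ha⟩ := h.exists_pre (b - φ y) (by simp [hφ, hy])
      obtain ⟨x, rfl⟩ := h'.surj a
      exact ⟨(x, y), by simp [he, ha]⟩
    · rintro ⟨x, y⟩
      simp [hd, he, h'.zero, hθ, hθ0]
    · rintro ⟨x, y⟩ hxy
      rw [he] at hxy
      have h1 : e'' y = 0 := by
        have := congrArg g hxy
        simpa [h.comp_zero, hφ] using this
      obtain ⟨y', rfl⟩ := h''.pre y h1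
      have h2 : e' (x - θ y') = 0 := by
        apply h.1
        rw [map_sub, map_sub, hθ, hθ0, map_zero]
        simpa using hxy
      obtain ⟨x', hx'⟩ := h'.pre _ h2
      exact ⟨(x', y'), by simp [hd, hx']⟩
  have hπ := rexact_mkQ d.dualMap
  set π := (LinearMap.range d.dualMap).mkQ with hπdef
  obtain ⟨a, ha⟩ := hπ''.desc (π ∘ₗ (LinearMap.snd R G1' G1'').dualMap) (fun ψ => by
    have : (LinearMap.snd R G1' G1'').dualMap (d''.dualMap ψ) =
        d.dualMap ((LinearMap.snd R G0' G0'').dualMap ψ) := by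
      ext x <;> simp [hd]
    rw [LinearMap.comp_apply, this, hπ.zero])
  obtain ⟨b, hb⟩ := hπ.desc (π' ∘ₗ (LinearMap.inl R G1' G1'').dualMap) (fun ψ => by
    have : (LinearMap.inl R G1' G1'').dualMap (d.dualMap ψ) =
        d'.dualMap ((LinearMap.inl R G0' G0'').dualMap ψ) := by
      ext x; simp [hd]
    rw [LinearMap.comp_apply, this, hπ'.zero])
  refine ⟨ModuleCat.of R (Module.Dual R (G1' × G1'') ⧸ LinearMap.range d.dualMap), a, b,
    IsQ.mk0 hex hπ, IsSES.mk' ?_ ?_ ?_ ?_⟩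
  · intro x hx
    obtain ⟨φ'', rfl⟩ := hπ''.surj x
    rw [ha, LinearMap.comp_apply] at hx
    obtain ⟨ψ, hψ⟩ := hπ.pre _ hx
    have hψ1 : ∀ x y, ψ (d' x + θ y, d'' y) = φ'' y := fun x y => by
      have := LinearMap.congr_fun hψ (x, y)
      simpa [hd] using this
    obtain ⟨χ, hχ⟩ := h'.desc (ψ ∘ₗ LinearMap.inl R _ _) (fun x => by
      have := hψ1 x 0
      simpa using this)
    obtain ⟨χ', hχ'⟩ := hext χ
    have : φ'' = d''.dualMap (ψ ∘ₗ LinearMap.inr R _ _ - χ' ∘ₗ φ) := by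
      ext y
      have h1 := hψ1 0 y
      have h2 : χ' (φ (d'' y)) = - ψ (θ y, 0) := by
        have h3 : φ (d'' y) = - f (e' (θ y)) := by
          rw [hθ, hθ0]; simp
        have h4 := hχ (θ y)
        simp only [LinearMap.comp_apply, LinearMap.inl_apply] at h4
        rw [h3, map_neg, hχ', h4]
      have h5 : ψ (θ y, d'' y) = ψ (θ y, 0) + ψ (0, d'' y) := by
        rw [← map_add]; simp
      simp only [map_zero, zero_add] at h1
      simp [h2, ← h1, h5, add_comm]
    rw [this, hπ''.zero]
  · intro y
    obtain ⟨φ', rfl⟩ := hπ'.surj y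
    refine ⟨π ((LinearMap.fst R _ _).dualMap φ'), ?_⟩
    rw [hb, LinearMap.comp_apply]
    congr 1
  · intro x
    obtain ⟨φ'', rfl⟩ := hπ''.surj x
    rw [ha, LinearMap.comp_apply, hb, LinearMap.comp_apply]
    convert map_zero π'
    ext x
    simp
  · intro z hz
    obtain ⟨ψ, rfl⟩ := hπ.surj z
    rw [hb, LinearMap.comp_apply] at hz
    obtain ⟨ψ', hψ'⟩ := hπ'.pre _ hz
    have hψ1 : ∀ x, ψ' (d' x) = ψ (x, 0) := fun x => by
      have := LinearMap.congr_fun hψ' x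
      simpa using this
    refine ⟨π'' (ψ ∘ₗ LinearMap.inr R _ _ - ψ' ∘ₗ θ), ?_⟩
    rw [ha, LinearMap.comp_apply, ← sub_eq_zero, ← map_sub]
    have : (LinearMap.snd R G1' G1'').dualMap (ψ ∘ₗ LinearMap.inr R _ _ - ψ' ∘ₗ θ) - ψ =
        d.dualMap (-((LinearMap.fst R G0' G0'').dualMap ψ')) := by
      ext x
      · simp [hd, hψ1]
        exact map_zero ψ
      · simp [hd]
    rw [this, hπ.zero]

variable [IsNoetherianRing R]

theorem ses_succ {n : ℕ} {f : N' →ₗ[R] N} {g : N →ₗ[R] N''} (h : IsSES f g)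
    (hext : EZ R (n+1) N')
    (h' : IsQ (R := R) (n+1) N' Q') (h'' : IsQ (R := R) (n+1) N'' Q'') :
    ∃ (Q : ModuleCat.{u} R) (a : Q'' →ₗ[R] Q) (b : Q →ₗ[R] Q'), IsQ (R := R) (n+1) N Q ∧
      IsSES a b := by
  induction n generalizing N N' N'' with
  | zero =>
    obtain ⟨KA, FA, iA, πA, h1, h2, h3, h4⟩ := h'
    obtain ⟨KC, FC, iC, πC, h1', h2', h3', h4'⟩ := h''
    obtain ⟨KB, iB, πB, f', g', hB, hK, h5, -⟩ := horseshoe h h3 h3'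
    obtain ⟨Q, a, b, hQ, hab⟩ := ses0 hK (fun χ => by
      obtain ⟨ψ, hψ⟩ := hext.extend h3 χ
      refine ⟨ψ ∘ₗ LinearMap.fst R _ _ ∘ₗ iB, fun x => ?_⟩
      simp [h5, hψ]) h4 h4'
    exact ⟨Q, a, b, IsQ.mk_succ hB hQ, hab⟩
  | succ n ih =>
    obtain ⟨KA, FA, iA, πA, h1, h2, h3, h4⟩ := h'
    obtain ⟨KC, FC, iC, πC, h1', h2', h3', h4'⟩ := h''
    obtain ⟨KB, iB, πB, f', g', hB, hK, h5, -⟩ := horseshoe h h3 h3'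
    obtain ⟨Q, a, b, hQ, hab⟩ := ih hK (hext.syz h3) h4 h4'
    exact ⟨Q, a, b, IsQ.mk_succ hB hQ, hab⟩

theorem ses_all {n : ℕ} {f : N' →ₗ[R] N} {g : N →ₗ[R] N''} (h : IsSES f g)
    (hext : EZ R n N') (h' : IsQ (R := R) n N' Q') (h'' : IsQ (R := R) n N'' Q'') :
    ∃ (Q : ModuleCat.{u} R) (a : Q'' →ₗ[R] Q) (b : Q →ₗ[R] Q'), IsQ (R := R) n N Q ∧
      IsSES a b := by
  cases n with
  | zero => exact ses0 h (fun χ => ⟨0, fun x => by simp [hext.hom χ]⟩) h' h''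
  | succ n => exact ses_succ h hext h' h''

variable {𝒳 : Set (ModuleCat.{u} R)}

theorem TT.ext (h𝒳 : IsResolving R 𝒳) {n : ℕ} {f : N' →ₗ[R] N} {g : N →ₗ[R] N''}
    (h : IsSES f g) (hext : EZ R n N') (h' : TT 𝒳 n N') (h'' : TT 𝒳 n N'') : TT 𝒳 n N := by
  obtain ⟨Q', hm', hQ'⟩ := h'
  obtain ⟨Q'', hm'', hQ''⟩ := h''
  obtain ⟨Q, a, b, hQ, hab⟩ := ses_all h hext hQ' hQ''
  exact ⟨Q, hm''.ext h𝒳 hab hm', hQ⟩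

theorem TT.quot (h𝒳 : IsResolving R 𝒳) {n : ℕ} {f : N' →ₗ[R] N} {g : N →ₗ[R] N''}
    (h : IsSES f g) [Module.Finite R N''] (hext : EZ R n N') (h' : TT 𝒳 n N')
    (hN : TT 𝒳 n N) : TT 𝒳 n N'' := by
  obtain ⟨Q', hm', hQ'⟩ := h'
  obtain ⟨Q'', hQ''⟩ := exists_IsQ (R := R) n N''
  obtain ⟨Q, a, b, hQ, hab⟩ := ses_all h hext hQ' hQ''
  exact ⟨Q'', (hN.all h𝒳 hQ).ker h𝒳 hab hm', hQ''⟩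

theorem TT.congr (h𝒳 : IsResolving R 𝒳) {n : ℕ} (e : N ≃ₗ[R] N') (h : TT 𝒳 n N)
    [Module.Finite R N'] : TT 𝒳 n N' :=
  h.retr h𝒳 e.symm.toLinearMap e.toLinearMap (by simp)

/-- the filtration lemma -/
theorem filt (h𝒳 : IsResolving R 𝒳) {j : ℕ} (I : Ideal R)
    (hS : ∀ q : PrimeSpectrum R, I ≤ q.asIdeal →
      TT 𝒳 j (R ⧸ q.asIdeal) ∧ EZ R j (R ⧸ q.asIdeal))
    (L : Type u) [AddCommGroup L] [Module R L] [Module.Finite R L]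
    (hL : ∀ s ∈ I, ∀ x : L, s • x = 0) : TT 𝒳 j L ∧ EZ R j L := by
  induction ‹Module.Finite R L› using IsNoetherianRing.induction_on_isQuotientEquivQuotientPrime R
    with
  | subsingleton L =>
    exact ⟨TT.proj h𝒳, EZ.of_subsingleton⟩
  | quotient L p e =>
    have : I ≤ p.asIdeal := by
      intro s hs
      have := hL s hs (e.symm 1)
      rw [← map_smul, LinearEquiv.map_eq_zero_iff] at this
      rw [← Ideal.Quotient.eq_zero_iff_mem, ← this]
      simp [Algebra.smul_def]
    obtain ⟨h1, h2⟩ := hS p this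
    exact ⟨h1.congr h𝒳 e.symm, h2.congr e.symm⟩
  | exact L1 L2 L3 f g hf hg hfg h1 h3 =>
    have h : IsSES f g := ⟨hf, hg, (LinearMap.exact_iff.1 hfg).symm⟩
    obtain ⟨h4, h5⟩ := h1 (fun s hs x => hf (by rw [map_smul, hL s hs, map_zero]))
    obtain ⟨h6, h7⟩ := h3 (fun s hs x => by
      obtain ⟨y, rfl⟩ := hg x
      rw [← map_smul, hL s hs, map_zero])
    exact ⟨h4.ext h𝒳 h h5 h6, h5.ext h h7⟩

end P6

section P7
open CategoryTheory
variable {R : Type u} [CommRing R] [IsNoetherianRing R]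
variable {A B C K F M N Q X C' : Type u}
  [AddCommGroup A] [Module R A] [AddCommGroup B] [Module R B] [AddCommGroup C] [Module R C]
  [AddCommGroup K] [Module R K] [AddCommGroup F] [Module R F] [AddCommGroup M] [Module R M]
  [AddCommGroup X] [Module R X] [AddCommGroup N] [Module R N] [AddCommGroup Q] [Module R Q]
  [AddCommGroup C'] [Module R C']
variable {𝒳 : Set (ModuleCat.{u} R)}

theorem clb {i : K →ₗ[R] F} {e : F →ₗ[R] A} (h : IsSES i e) [Module.Finite R F]
    [Module.Projective R F] (hC' : IsQ (R := R) 0 K C') :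
    ∃ (C B F2 L : ModuleCat.{u} R) (l : L →ₗ[R] C) (b : C →ₗ[R] B) (β : B →ₗ[R] F2)
      (γ : F2 →ₗ[R] C'), Module.Finite R F2 ∧ Module.Projective R F2 ∧ Module.Finite R L ∧
      Module.Finite R B ∧
      IsQ (R := R) 0 A C ∧ IsSES l b ∧ IsSES β γ ∧ ∀ s : R, SP A s → ∀ x : L, s • x = 0 := by
  obtain ⟨F2, F', d', q, γ, _, _, _, _, h', hγ⟩ := hC'
  let d := i ∘ₗ q
  have hd : RExact d e := RExact.comp h h'.surj
  have hC := rexact_mkQ d.dualMap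
  obtain ⟨b0, hb0⟩ := hC.desc d'.dualMap (fun φ => by
    ext x
    simp [d, h'.zero])
  let b : (Module.Dual R F' ⧸ LinearMap.range d.dualMap) →ₗ[R] LinearMap.range d'.dualMap :=
    b0.codRestrict _ (fun x => by
      obtain ⟨φ, rfl⟩ := hC.surj x
      rw [hb0]
      exact ⟨φ, rfl⟩)
  have hb : Function.Surjective b := by
    rintro ⟨_, φ, rfl⟩
    exact ⟨_, Subtype.ext (hb0 φ)⟩
  refine ⟨ModuleCat.of R (Module.Dual R F' ⧸ LinearMap.range d.dualMap),
    ModuleCat.of R (LinearMap.range d'.dualMap), ModuleCat.of R (Module.Dual R F2),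
    ModuleCat.of R (LinearMap.ker b), (LinearMap.ker b).subtype, b,
    (LinearMap.range d'.dualMap).subtype, γ,
    inferInstanceAs (Module.Finite R (Module.Dual R F2)),
    inferInstanceAs (Module.Projective R (Module.Dual R F2)),
    inferInstanceAs (Module.Finite R (LinearMap.ker b)),
    inferInstanceAs (Module.Finite R (LinearMap.range d'.dualMap)), IsQ.mk0 hd hC,
    isSES_ker hb, ?_, ?_⟩
  · refine IsSES.mk' ?_ hγ.surj ?_ ?_
    · intro a ha; exact Subtype.ext ha
    · rintro ⟨_, φ, rfl⟩
      exact hγ.zero φ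
    · intro φ hφ
      obtain ⟨ψ, rfl⟩ := hγ.pre φ hφ
      exact ⟨⟨_, ψ, rfl⟩, rfl⟩
  · rintro s hs ⟨x, hx⟩
    apply Subtype.ext
    obtain ⟨φ, rfl⟩ := hC.surj x
    have hx' : d'.dualMap φ = 0 := by
      rw [← hb0]
      exact congrArg Subtype.val hx
    obtain ⟨χ, hχ⟩ := h'.desc φ (fun x => LinearMap.congr_fun hx' x)
    obtain ⟨v, hv⟩ := hs.cover h.2.1
    obtain ⟨w, hw⟩ := h.lift (s • LinearMap.id - v ∘ₗ e) (fun x => by simp [hv])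
    have hwi : ∀ k, w (i k) = s • k := fun k => h.1 (by
      rw [hw]; simp [h.comp_zero])
    have : s • φ = d.dualMap (χ ∘ₗ w) := by
      ext x
      simp [d, hwi, hχ]
    change s • (LinearMap.range d.dualMap).mkQ φ = 0
    rw [← map_smul, this, hC.zero]

theorem TT.prodF {n : ℕ} (h : TT 𝒳 n N) [Module.Finite R F] [Module.Projective R F] :
    TT 𝒳 n (N × F) := by
  obtain ⟨Q, h1, h2⟩ := h
  exact ⟨Q, h1, h2.prod⟩

theorem TT.allQ (h𝒳 : IsResolving R 𝒳) {n : ℕ} (h : TT 𝒳 n C) (hC : IsQ (R := R) 0 A C)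
    (hC' : IsQ (R := R) 0 A C') : TT 𝒳 n C' := by
  obtain ⟨P, u, v, _, _, h5⟩ := retrS hC' hC LinearMap.id LinearMap.id (s := 1) (by simp)
  have := hC'.finite
  exact (h.prodF (F := P)).retr h𝒳 u v (by simpa using h5)

/-- the hypothesis on annihilated modules -/
def LH (𝒳 : Set (ModuleCat.{u} R)) (j k : ℕ) (A : Type u) [AddCommGroup A] [Module R A] : Prop :=
  ∀ (L : ModuleCat.{u} R), Module.Finite R L → (∀ s : R, sp k A s → ∀ x : L, s • x = 0) →
    TT 𝒳 j L ∧ EZ R j L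

/-- all transposes satisfy TT -/
def UU (𝒳 : Set (ModuleCat.{u} R)) (j : ℕ) (A : Type u) [AddCommGroup A] [Module R A] : Prop :=
  ∀ (C : ModuleCat.{u} R), IsQ (R := R) 0 A C → TT 𝒳 j C

theorem star_core (h𝒳 : IsResolving R 𝒳) (m : ℕ) : ∀ (j : ℕ) (A : Type u) [AddCommGroup A]
    [Module R A] [Module.Finite R A], (∀ k, LH 𝒳 (j+k) k A) → sp m A (1:R) → UU 𝒳 j A := by
  induction m with
  | zero =>
    intro j A _ _ _ H h1 C hC
    have := SP_one_iff.1 h1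
    obtain ⟨P, u, v, _, _, h5⟩ := retrS hC (isQ_proj (n := 0) (F := A))
      LinearMap.id LinearMap.id (s := 1) (by simp)
    have := hC.finite
    have : Module.Projective R C := SP_one_iff.1
      ⟨ModuleCat.of R (PUnit.{u+1} × P), u, v, inferInstanceAs (Module.Finite R (PUnit.{u+1} × P)),
        inferInstanceAs (Module.Projective R (PUnit.{u+1} × P)), h5⟩
    exact TT.proj h𝒳
  | succ m ih =>
    intro j A _ _ _ H h1 C hC
    obtain ⟨K, F, i, e, _, _, h⟩ := exists_cover_ses R A
    have := h.finite_left
    obtain ⟨C', hC'⟩ := exists_IsQ (R := R) 0 K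
    obtain ⟨C2, B, F2, L, l, b, β, γ, _, _, _, _, hC2, hl, hβ, hs⟩ := clb h hC'
    have hT : TT 𝒳 (j+1) C' := by
      refine ih (j+1) K ?_ ((sp_syz_iff h).1 h1) C' hC'
      intro k L hL hsL
      have := H (k+1) L hL (fun s hs => hsL s ((sp_syz_iff h).1 hs))
      rwa [show j + 1 + k = j + (k+1) by ring]
    have hB : TT 𝒳 j B := hT.syz h𝒳 hβ
    obtain ⟨hL1, hL2⟩ := H 0 L ‹_› (fun s h => hs s h)
    exact (TT.ext h𝒳 hl hL2 hL1 hB).allQ h𝒳 hC2 hC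

theorem star_mem (h𝒳 : IsResolving R 𝒳) {m : ℕ} [Module.Finite R M] (hM : sp m M (1:R))
    (H : ∀ k, LH 𝒳 k k M) : Mem 𝒳 M := by
  obtain ⟨C, hC⟩ := exists_IsQ (R := R) 0 M
  exact (star_core h𝒳 m 0 M (fun k => by simpa using H k) hM C hC).mem0 h𝒳 hC

theorem UU.of_mem (h : Mem 𝒳 M) : UU 𝒳 0 M := fun _ hC => h.TT hC

theorem UU.up (h𝒳 : IsResolving R 𝒳) {i : K →ₗ[R] F} {e : F →ₗ[R] A} (h : IsSES i e)
    [Module.Finite R F] [Module.Projective R F] {j : ℕ} (hA : UU 𝒳 j A)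
    (H : LH 𝒳 j 0 A) : UU 𝒳 (j+1) K := by
  intro C' hC'
  obtain ⟨C2, B, F2, L, l, b, β, γ, _, _, _, _, hC2, hl, hβ, hs⟩ := clb h hC'
  obtain ⟨hL1, hL2⟩ := H L ‹_› (fun s h => hs s h)
  exact TT.of_syz hβ (TT.quot h𝒳 hl hL2 hL1 (hA _ hC2))

theorem LH.of_filt (h𝒳 : IsResolving R 𝒳) {j k : ℕ} [Module.Finite R A]
    (hS : ∀ q : PrimeSpectrum R, spI k A ≤ q.asIdeal →
      TT 𝒳 j (R ⧸ q.asIdeal) ∧ EZ R j (R ⧸ q.asIdeal)) : LH 𝒳 j k A :=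
  fun L _ h => filt h𝒳 (spI k A) hS L (fun s hs x => h s hs x)

end P7

section P8
open CategoryTheory
set_option linter.unusedSectionVars false
variable {R : Type u} [CommRing R]
variable {A B C K F M N Q X C' F' : Type u}
  [AddCommGroup A] [Module R A] [AddCommGroup B] [Module R B] [AddCommGroup C] [Module R C]
  [AddCommGroup K] [Module R K] [AddCommGroup F] [Module R F] [AddCommGroup M] [Module R M]
  [AddCommGroup X] [Module R X] [AddCommGroup N] [Module R N] [AddCommGroup Q] [Module R Q]
  [AddCommGroup C'] [Module R C'] [AddCommGroup F'] [Module R F']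
variable {𝒳 : Set (ModuleCat.{u} R)}

theorem EZ.ann (h : EZ R 0 N) {s : R} (hs : SP N s) (x : N) : s • x = 0 := by
  obtain ⟨P, u, v, _, _, h3⟩ := hs
  have : u x = 0 := by
    rw [← Module.forall_dual_apply_eq_zero_iff R]
    intro φ
    exact LinearMap.congr_fun (h.hom (φ ∘ₗ u)) x
  rw [← h3, this, map_zero]

theorem IsQ.ses {n : ℕ} (h : IsQ (R := R) (n+1) N Q) (hN : EZ R (n+1) N) :
    ∃ (Q' P : ModuleCat.{u} R) (a : Q' →ₗ[R] P) (b : P →ₗ[R] Q), Module.Finite R P ∧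
      Module.Projective R P ∧ IsSES a b ∧ IsQ (R := R) n N Q' := by
  induction n generalizing N with
  | zero =>
    obtain ⟨K, G, i, π, _, _, h3, h4⟩ := h
    obtain ⟨G1, G0, d, e, γ, _, _, _, _, h', hγ⟩ := h4
    have hC := rexact_mkQ (i ∘ₗ e).dualMap
    obtain ⟨a, ha⟩ := hC.desc d.dualMap (fun φ => by
      ext x
      simp [h'.zero])
    refine ⟨ModuleCat.of R (Module.Dual R G0 ⧸ LinearMap.range (i ∘ₗ e).dualMap),
      ModuleCat.of R (Module.Dual R G1), a, γ,
      inferInstanceAs (Module.Finite R (Module.Dual R G1)),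
      inferInstanceAs (Module.Projective R (Module.Dual R G1)), ?_,
      IsQ.mk0 (RExact.comp h3 h'.surj) hC⟩
    refine IsSES.mk' ?_ hγ.surj ?_ ?_
    · intro x hx
      obtain ⟨φ, rfl⟩ := hC.surj x
      rw [ha] at hx
      obtain ⟨χ, hχ⟩ := h'.desc φ (fun x => LinearMap.congr_fun hx x)
      obtain ⟨ψ, hψ⟩ := hN.extend h3 χ
      have : φ = (i ∘ₗ e).dualMap ψ := by
        ext x
        simp [hψ, hχ]
      rw [this, hC.zero]
    · intro x
      obtain ⟨φ, rfl⟩ := hC.surj x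
      rw [ha, hγ.zero]
    · intro φ hφ
      obtain ⟨ψ, rfl⟩ := hγ.pre φ hφ
      exact ⟨_, ha ψ⟩
  | succ n ih =>
    obtain ⟨K, G, i, π, _, _, h3, h4⟩ := h
    obtain ⟨Q', P, a, b, h5, h6, h7, h8⟩ := ih h4 (hN.syz h3)
    exact ⟨Q', P, a, b, h5, h6, h7, IsQ.mk_succ h3 h8⟩

variable [IsNoetherianRing R]

theorem IsQ.SP_ann {n : ℕ} (h : IsQ (R := R) n N Q) {s : R} (hs : ∀ x : N, s • x = 0) :
    SP Q s := by
  obtain ⟨P, u, v, _, _, h5⟩ := retrS h (isQ_proj (F := PUnit.{u+1}) (n := n)) 0 0 (s := s)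
    (fun x => by simp [hs])
  exact ⟨ModuleCat.of R (PUnit.{u+1} × P), u, v,
    inferInstanceAs (Module.Finite R (PUnit.{u+1} × P)),
    inferInstanceAs (Module.Projective R (PUnit.{u+1} × P)), h5⟩

theorem IsQ.sp_one {n : ℕ} (h : IsQ (R := R) n N Q) (hN : ∀ j ≤ n, EZ R j N) :
    sp (n+1) Q (1 : R) := by
  induction n generalizing Q with
  | zero =>
    obtain ⟨G1, G0, d, e, γ, _, _, _, _, h', hγ⟩ := h
    have : IsSES d.dualMap γ := by
      refine IsSES.mk' ?_ hγ.surj hγ.zero hγ.pre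
      intro φ hφ
      obtain ⟨χ, hχ⟩ := h'.desc φ (fun x => LinearMap.congr_fun hφ x)
      ext x
      rw [← hχ, (hN 0 le_rfl).hom χ]
      simp
    rw [sp_syz_iff this]
    exact sp.of_proj 1
  | succ n ih =>
    obtain ⟨Q', P, a, b, _, _, h7, h8⟩ := h.ses (hN _ le_rfl)
    rw [sp_syz_iff h7]
    exact ih h8 (fun j hj => hN j (by omega))

theorem IsQ.ann {n : ℕ} (h : IsQ (R := R) n N Q) (hN : ∀ j ≤ n, EZ R j N) {s : R}
    (hs : sp n Q s) (x : N) : s • x = 0 := by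
  induction n generalizing Q with
  | zero =>
    refine (hN 0 le_rfl).ann ?_ x
    obtain ⟨P, u, v, _, _, h3⟩ := hs
    obtain ⟨P', u', v', _, _, h5⟩ := retrS h.symm (isQ_proj (F := P) (n := 0)) u v h3
    exact ⟨ModuleCat.of R (PUnit.{u+1} × P'), u', v',
      inferInstanceAs (Module.Finite R (PUnit.{u+1} × P')),
      inferInstanceAs (Module.Projective R (PUnit.{u+1} × P')), h5⟩
  | succ n ih =>
    obtain ⟨Q', P, a, b, _, _, h7, h8⟩ := h.ses (hN _ le_rfl)
    exact ih h8 (fun j hj => hN j (by omega)) ((sp_syz_iff h7).1 hs)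

/-- pullback of `π` along multiplication by `x` -/
def Yx (x : R) (π : F →ₗ[R] X) : Submodule R (X × F) :=
  LinearMap.ker (π ∘ₗ LinearMap.snd R X F - x • LinearMap.fst R X F)

theorem mem_Yx {x : R} {π : F →ₗ[R] X} {m : X} {f : F} : (m, f) ∈ Yx x π ↔ π f = x • m := by
  simp [Yx, sub_eq_zero]

theorem Yx_ses {i : K →ₗ[R] F} {π : F →ₗ[R] X} (h : IsSES i π) (x : R) :
    IsSES ((LinearMap.inr R X F ∘ₗ i).codRestrict (Yx x π) (fun k => by
      rw [LinearMap.comp_apply, LinearMap.inr_apply, mem_Yx, h.comp_zero, smul_zero]))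
      (LinearMap.fst R X F ∘ₗ (Yx x π).subtype) := by
  refine IsSES.mk' ?_ ?_ ?_ ?_
  · intro k hk
    have := congrArg (fun z => z.1.2) hk
    apply h.1
    simpa using this
  · intro m
    obtain ⟨f, hf⟩ := h.2.1 (x • m)
    exact ⟨⟨(m, f), mem_Yx.2 hf⟩, rfl⟩
  · intro k
    simp
  · rintro ⟨⟨m, f⟩, hf⟩ h0
    obtain rfl : m = 0 := h0
    obtain ⟨k, rfl⟩ := h.exists_pre f (by rw [mem_Yx.1 hf, smul_zero])
    exact ⟨k, rfl⟩

theorem Yx_SP [Module.Finite R F] [Module.Projective R F] (x : R) (π : F →ₗ[R] X) :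
    SP (Yx x π) x := by
  refine SP.of_cover (F := F) ((π.prod (x • LinearMap.id)).codRestrict (Yx x π) (fun f => by
    simp [mem_Yx])) (LinearMap.snd R X F ∘ₗ (Yx x π).subtype) ?_
  rintro ⟨⟨m, f⟩, hf⟩
  apply Subtype.ext
  simp [mem_Yx.1 hf]

theorem Yx_sp [Module.Finite R F] [Module.Projective R F] [Module.Finite R X] (x : R)
    {π : F →ₗ[R] X} (h : Function.Surjective π) {n : ℕ} {s : R} (hs : sp n X s) :
    sp n (Yx x π) (s * s) :=
  sp.ext (Yx_ses (isSES_ker h) x) (((sp_syz_iff (isSES_ker h)).1 hs.mono_succ)) hs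

theorem Yx_mem (h𝒳 : IsResolving R 𝒳) [Module.Finite R F] [Module.Projective R F] (x : R)
    {π : F →ₗ[R] X} (h : Function.Surjective π) (hX : Mem 𝒳 X) : Mem 𝒳 (Yx x π) :=
  Mem.ext h𝒳 (Yx_ses (isSES_ker h) x) (hX.syz h𝒳 (isSES_ker h)) hX

theorem Yx_syz {i : K →ₗ[R] F} {π : F →ₗ[R] X} (h : IsSES i π) {π' : F' →ₗ[R] K}
    (h' : Function.Surjective π') (x : R) :
    ∃ (a : Yx x π' →ₗ[R] F × F') (b : F × F' →ₗ[R] Yx x π), IsSES a b ∧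
      ∀ k f hk, a ⟨(k, f), hk⟩ = (i k, f) := by
  refine ⟨(i.prodMap LinearMap.id) ∘ₗ (Yx x π').subtype,
    ((π ∘ₗ LinearMap.fst R F F').prod (x • LinearMap.fst R F F' - i ∘ₗ π' ∘ₗ
      LinearMap.snd R F F')).codRestrict (Yx x π) (fun f => by simp [mem_Yx, h.comp_zero]),
    ?_, fun k f hk => rfl⟩
  refine IsSES.mk' ?_ ?_ ?_ ?_
  · rintro ⟨⟨k, f⟩, hk⟩ h0
    have h1 : i k = 0 := congrArg Prod.fst h0
    have h2 : f = 0 := congrArg Prod.snd h0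
    have h3 : k = 0 := h.1 (by rw [h1, map_zero])
    subst h2 h3
    rfl
  · rintro ⟨⟨m, f1⟩, hf⟩
    obtain ⟨f, rfl⟩ := h.2.1 m
    rw [mem_Yx] at hf
    obtain ⟨k, hk⟩ := h.exists_pre (x • f - f1) (by simp [hf])
    obtain ⟨f', rfl⟩ := h' k
    refine ⟨(f, f'), Subtype.ext ?_⟩
    simp [hk]
  · rintro ⟨⟨k, f⟩, hk⟩
    apply Subtype.ext
    rw [mem_Yx] at hk
    simp [hk, h.comp_zero]
  · rintro ⟨f, f'⟩ h0
    have h1 : π f = 0 := congrArg (fun z => z.1.1) h0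
    have h2 : x • f - i (π' f') = 0 := congrArg (fun z => z.1.2) h0
    obtain ⟨k, rfl⟩ := h.exists_pre f h1
    refine ⟨⟨(k, f'), mem_Yx.2 (h.1 ?_)⟩, rfl⟩
    rw [map_smul, ← sub_eq_zero.1 h2]

theorem S_lemma (h𝒳 : IsResolving R 𝒳) [Module.Finite R F] [Module.Projective R F]
    {π : F →ₗ[R] M} (hπ : Function.Surjective π) {g : X →ₗ[R] M} (hg : Function.Surjective g)
    (h : M →ₗ[R] X) {s : R} (hgh : ∀ m, g (h m) = s • m) (hX : Mem 𝒳 X)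
    (hY : Mem 𝒳 (Yx s π)) : Mem 𝒳 M := by
  obtain ⟨φ, hφ⟩ := proj_lift hg π
  let K := LinearMap.ker g
  let j : Yx s π →ₗ[R] K := ((h ∘ₗ LinearMap.fst R M F - φ ∘ₗ LinearMap.snd R M F) ∘ₗ
    (Yx s π).subtype).codRestrict K (by
      rintro ⟨⟨m, f⟩, hf⟩
      rw [mem_Yx] at hf
      simp [K, hgh, hφ, hf])
  let α : Yx s π →ₗ[R] M × K × F := (LinearMap.fst R M F ∘ₗ (Yx s π).subtype).prod
    (j.prod (LinearMap.snd R M F ∘ₗ (Yx s π).subtype))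
  let β : M × K × F →ₗ[R] X := (-h).coprod (K.subtype.coprod φ)
  have : IsSES α β := by
    refine IsSES.mk' ?_ ?_ ?_ ?_
    · rintro ⟨⟨m, f⟩, hf⟩ h0
      have h1 : m = 0 := congrArg Prod.fst h0
      have h2 : f = 0 := congrArg (fun z => z.2.2) h0
      subst h1 h2
      rfl
    · intro x
      obtain ⟨f, hf⟩ := hπ (g x)
      refine ⟨(0, ⟨x - φ f, by simp [K, hφ, hf]⟩, f), ?_⟩
      simp [β]
    · rintro ⟨⟨m, f⟩, hf⟩
      simp [α, β, j]
    · rintro ⟨m, ⟨k, hk⟩, f⟩ h0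
      have h1 : - h m + (k + φ f) = 0 := h0
      have hk' : g k = 0 := hk
      refine ⟨⟨(m, f), mem_Yx.2 ?_⟩, ?_⟩
      · have := congrArg g h1
        simp only [map_add, map_neg, hgh, hk', hφ, map_zero, zero_add] at this
        exact (neg_add_eq_zero.1 this).symm
      · have : k = h m - φ f := by
          rw [← sub_eq_zero, ← h1]; abel
        subst this
        rfl
  exact (Mem.ext h𝒳 this hY hX).fst h𝒳

theorem S_lemma' (h𝒳 : IsResolving R 𝒳) [Module.Finite R F] [Module.Projective R F]
    {π : F →ₗ[R] M} (hπ : Function.Surjective π) (g : X →ₗ[R] M)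
    (h : M →ₗ[R] X) {s : R} (hgh : ∀ m, g (h m) = s • m) (hX : Mem 𝒳 X)
    (hY : Mem 𝒳 (Yx s π)) : Mem 𝒳 M := by
  refine S_lemma h𝒳 hπ (X := X × F) (g := g.coprod π) ?_ (h.prod 0) (s := s) ?_
    (hX.prod h𝒳 (mem_proj h𝒳)) hY
  · intro m
    obtain ⟨f, rfl⟩ := hπ m
    exact ⟨(0, f), by simp⟩
  · intro m
    simp [hgh]

end P8

section P9
open CategoryTheory
set_option linter.unusedSectionVars false
variable {R : Type u} [CommRing R]
variable {A B C K F M N Q X C' F' : Type u}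
  [AddCommGroup A] [Module R A] [AddCommGroup B] [Module R B] [AddCommGroup C] [Module R C]
  [AddCommGroup K] [Module R K] [AddCommGroup F] [Module R F] [AddCommGroup M] [Module R M]
  [AddCommGroup X] [Module R X] [AddCommGroup N] [Module R N] [AddCommGroup Q] [Module R Q]
  [AddCommGroup C'] [Module R C'] [AddCommGroup F'] [Module R F']
variable {𝒳 : Set (ModuleCat.{u} R)}

/-- witness data for non-splitting at `p` -/
def Star (p : Ideal R) : ∀ (_ : ℕ) (_ : Set R) (X : Type u) [AddCommGroup X] [Module R X], Prop
  | 0, J, X, _, _ => ∃ (K F : ModuleCat.{u} R) (i : K →ₗ[R] F) (e : F →ₗ[R] X),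
      Module.Finite R F ∧ Module.Projective R F ∧ IsSES i e ∧ ∃ (a : K) (c : K →ₗ[R] R),
      i a ∈ p • (⊤ : Submodule R F) ∧ c a ∉ p ∧ ∀ x ∈ J, ∃ ψ : F →ₗ[R] R, ∀ k, ψ (i k) = x * c k
  | n+1, J, X, _, _ => ∃ (K F : ModuleCat.{u} R) (i : K →ₗ[R] F) (e : F →ₗ[R] X),
      Module.Finite R F ∧ Module.Projective R F ∧ IsSES i e ∧ Star p n J K

theorem Star.span {p : Ideal R} {n : ℕ} {J : Set R} (h : Star p n J X) :
    Star p n (Ideal.span J : Set R) X := by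
  induction n generalizing X with
  | zero =>
    obtain ⟨K, F, i, e, h1, h2, h3, a, c, h4, h5, h6⟩ := h
    refine ⟨K, F, i, e, h1, h2, h3, a, c, h4, h5, fun x hx => ?_⟩
    induction hx using Submodule.span_induction with
    | mem x hx => exact h6 x hx
    | zero => exact ⟨0, by simp⟩
    | add x y _ _ hx hy =>
      obtain ⟨ψ, hψ⟩ := hx
      obtain ⟨ψ', hψ'⟩ := hy
      exact ⟨ψ + ψ', fun k => by simp [hψ, hψ', add_mul]⟩
    | smul r x _ hx =>
      obtain ⟨ψ, hψ⟩ := hx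
      exact ⟨r • ψ, fun k => by simp [hψ, mul_assoc]⟩
  | succ n ih =>
    obtain ⟨K, F, i, e, h1, h2, h3, h4⟩ := h
    exact ⟨K, F, i, e, h1, h2, h3, ih h4⟩

theorem map_smul_top {p : Ideal R} (f : A →ₗ[R] B) {a : A} (ha : a ∈ p • (⊤ : Submodule R A)) :
    f a ∈ p • (⊤ : Submodule R B) := by
  have : f a ∈ (p • (⊤ : Submodule R A)).map f := ⟨a, ha, rfl⟩
  rw [Submodule.map_smul''] at this
  exact Submodule.smul_mono le_rfl le_top this

variable [IsNoetherianRing R]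

theorem Star.step {p : Ideal R} {n : ℕ} {J : Set R} (h : Star p n J X) {x : R} (hx : x ∈ p) :
    ∃ (F : ModuleCat.{u} R) (π : F →ₗ[R] X), Module.Finite R F ∧ Module.Projective R F ∧
      Function.Surjective π ∧ Star p n (insert x J) (Yx x π) := by
  induction n generalizing X with
  | zero =>
    obtain ⟨K, F, i, e, h1, h2, h3, a, c, h4, h5, h6⟩ := h
    have := h3.finite_left
    obtain ⟨F', π', _, _, h'⟩ := exists_cover R K
    obtain ⟨α, β, hαβ, hα⟩ := Yx_syz h3 h' x
    obtain ⟨a', rfl⟩ := h' a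
    refine ⟨F, e, h1, h2, h3.2.1, ModuleCat.of R (Yx x π'), ModuleCat.of R (F × F'), α, β,
      inferInstanceAs (Module.Finite R (F × F')), inferInstanceAs (Module.Projective R (F × F')),
      hαβ, ⟨(π' a', x • a'), mem_Yx.2 (by simp)⟩, c ∘ₗ LinearMap.fst R K F' ∘ₗ (Yx x π').subtype,
      ?_, h5, ?_⟩
    · rw [hα]
      have e1 : (i (π' a'), x • a') =
        LinearMap.inl R F F' (i (π' a')) + x • (0, a') := by simp
      rw [e1]
      exact add_mem (map_smul_top _ h4) (Submodule.smul_mem_smul hx trivial)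
    · rintro y (rfl | hy)
      · refine ⟨c ∘ₗ π' ∘ₗ LinearMap.snd R F F', ?_⟩
        rintro ⟨⟨k, f⟩, hk⟩
        rw [hα]
        simp [mem_Yx.1 hk]
      · obtain ⟨ψ, hψ⟩ := h6 y hy
        refine ⟨ψ ∘ₗ LinearMap.fst R F F', ?_⟩
        rintro ⟨⟨k, f⟩, hk⟩
        rw [hα]
        simp [hψ]
  | succ n ih =>
    obtain ⟨K, F, i, e, h1, h2, h3, h4⟩ := h
    obtain ⟨F', π', _, _, h', h5⟩ := ih h4
    obtain ⟨α, β, hαβ, hα⟩ := Yx_syz h3 h' x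
    exact ⟨F, e, h1, h2, h3.2.1, ModuleCat.of R (Yx x π'), ModuleCat.of R (F × F'), α, β,
      inferInstanceAs (Module.Finite R (F × F')), inferInstanceAs (Module.Projective R (F × F')),
      hαβ, h5⟩

theorem Star.iter (h𝒳 : IsResolving R 𝒳) {p : Ideal R} {n : ℕ} (h : Star p n ∅ X)
    (hX : Mem 𝒳 X) (S : Finset R) (hS : ∀ x ∈ S, x ∈ p) :
    ∃ X' : ModuleCat.{u} R, Mem 𝒳 X' ∧ Star p n (S : Set R) X' ∧ ∀ x ∈ S, ∃ N, SP X' (x ^ N) := by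
  classical
  induction S using Finset.induction_on with
  | empty => exact ⟨ModuleCat.of R X, hX, by simpa using h, by simp⟩
  | insert x S hx ih =>
    obtain ⟨X', h1, h2, h3⟩ := ih (fun y hy => hS y (Finset.mem_insert_of_mem hy))
    obtain ⟨F, π, _, _, hπ, h4⟩ := h2.step (hS x (Finset.mem_insert_self x S))
    have := h1.finite h𝒳
    refine ⟨ModuleCat.of R (Yx x π), Yx_mem h𝒳 x hπ h1, by simpa using h4, fun y hy => ?_⟩
    rcases Finset.mem_insert.1 hy with rfl | hy
    · exact ⟨1, by simpa using Yx_SP y π⟩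
    · obtain ⟨N, hN⟩ := h3 y hy
      refine ⟨N + N, ?_⟩
      rw [pow_add]
      exact Yx_sp (n := 0) x hπ hN

theorem Star.full (h𝒳 : IsResolving R 𝒳) {p : Ideal R} {n : ℕ} (h : Star p n ∅ X)
    (hX : Mem 𝒳 X) :
    ∃ (X' : ModuleCat.{u} R) (_ : Module.Finite R X'), Mem 𝒳 X' ∧ Star p n (p : Set R) X' ∧
      ∀ q : PrimeSpectrum R, spI 0 X' ≤ q.asIdeal → p ≤ q.asIdeal := by
  obtain ⟨S, hS⟩ := (isNoetherianRing_iff_ideal_fg R).1 ‹_› p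
  obtain ⟨X', h1, h2, h3⟩ := h.iter h𝒳 hX S (fun x hx => by
    rw [← hS]; exact Ideal.subset_span hx)
  refine ⟨X', h1.finite h𝒳, h1, ?_, ?_⟩
  · have := h2.span
    rwa [show Ideal.span (S : Set R) = p from hS] at this
  · intro q hq
    rw [← hS, Submodule.span_le]
    intro x hx
    obtain ⟨N, hN⟩ := h3 x hx
    exact q.2.mem_of_pow_mem N (hq hN)

theorem Star.useUU (h𝒳 : IsResolving R 𝒳) {p : Ideal R} {n j : ℕ} (h : Star p n (p : Set R) X)
    (hX : UU 𝒳 j X) (H : ∀ k < n, LH 𝒳 (j+k) k X) :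
    ∃ (C : ModuleCat.{u} R) (a : (R ⧸ p) →ₗ[R] C) (b : C →ₗ[R] (R ⧸ p)) (s : R), s ∉ p ∧
      TT 𝒳 (j+n) C ∧ ∀ x, b (a x) = s • x := by
  induction n generalizing X j with
  | zero =>
    obtain ⟨K, F, i, e, h1, h2, h3, a, c, h4, h5, h6⟩ := h
    have := h3.finite_left
    obtain ⟨F', π', _, _, h'⟩ := exists_cover R K
    obtain ⟨a', rfl⟩ := h' a
    have hC := rexact_mkQ (i ∘ₗ π').dualMap
    set γ := (LinearMap.range (i ∘ₗ π').dualMap).mkQ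
    have hQ : IsQ (R := R) 0 X (Module.Dual R F' ⧸ LinearMap.range (i ∘ₗ π').dualMap) :=
      IsQ.mk0 (RExact.comp h3 h') hC
    let a0 : (R ⧸ p) →ₗ[R] (Module.Dual R F' ⧸ LinearMap.range (i ∘ₗ π').dualMap) :=
      Submodule.liftQ p (LinearMap.toSpanSingleton R _ (γ (c ∘ₗ π'))) (by
        intro x hx
        obtain ⟨ψ, hψ⟩ := h6 x hx
        have : x • (c ∘ₗ π') = (i ∘ₗ π').dualMap ψ := by
          ext z
          simp [hψ]
        rw [LinearMap.mem_ker, LinearMap.toSpanSingleton_apply, ← map_smul, this, hC.zero])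
    obtain ⟨b, hb⟩ := hC.desc (p.mkQ ∘ₗ Module.Dual.eval R F' a') (fun ψ => by
      have h7 := map_smul_top ψ h4
      have h8 : ψ (i (π' a')) ∈ p := by simpa using h7
      exact Ideal.Quotient.eq_zero_iff_mem.2 h8)
    refine ⟨ModuleCat.of R _, a0, b, c (π' a'), h5, by simpa using hX (ModuleCat.of R _) hQ, ?_⟩
    intro x
    obtain ⟨r, rfl⟩ := Submodule.mkQ_surjective p x
    have : a0 (p.mkQ r) = r • γ (c ∘ₗ π') := rfl
    rw [this, map_smul, hb]
    simp only [LinearMap.comp_apply, Module.Dual.eval_apply]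
    change r • p.mkQ (c (π' a')) = _
    rw [← map_smul p.mkQ, ← map_smul p.mkQ, smul_eq_mul, smul_eq_mul, mul_comm]
  | succ n ih =>
    obtain ⟨K, F, i, e, h1, h2, h3, h4⟩ := h
    have h5 : UU 𝒳 (j+1) K := hX.up h𝒳 h3 (by simpa using H 0 (by omega))
    have := ih h4 h5 (fun k hk L hL hsL => by
      have := H (k+1) (by omega) L hL (fun s hs => hsL s ((sp_syz_iff h3).1 hs))
      rwa [show j + 1 + k = j + (k+1) by ring])
    rwa [show j + 1 + n = j + (n+1) by ring] at this

end P9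

section P10
open CategoryTheory
set_option linter.unusedSectionVars false
variable {R : Type u} [CommRing R]
variable {A B C K F M N Q X C' F' : Type u}
  [AddCommGroup A] [Module R A] [AddCommGroup B] [Module R B] [AddCommGroup C] [Module R C]
  [AddCommGroup K] [Module R K] [AddCommGroup F] [Module R F] [AddCommGroup M] [Module R M]
  [AddCommGroup X] [Module R X] [AddCommGroup N] [Module R N] [AddCommGroup Q] [Module R Q]
  [AddCommGroup C'] [Module R C'] [AddCommGroup F'] [Module R F']

theorem lin_alg (p : Ideal R) [hp : p.IsPrime] (n : ℕ) : ∀ (K : Type u) [AddCommGroup K]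
    [Module R K] (i : Fin n → (K →ₗ[R] R)) (c : K →ₗ[R] R)
    (_ : ∀ k, (∀ j, i j k ∈ p) → c k ∈ p),
    ∃ t, t ∉ p ∧ ∃ b : Fin n → R, ∀ k, t * c k - ∑ j, b j * i j k ∈ p := by
  induction n with
  | zero =>
    intro K _ _ i c H
    exact ⟨1, hp.one_notMem, 0, fun k => by simpa using H k (fun j => j.elim0)⟩
  | succ n ih =>
    intro K _ _ i c H
    let K0 : Submodule R K := Submodule.comap (i 0) p
    obtain ⟨t, ht, b, hb⟩ := ih K0 (fun j => i j.succ ∘ₗ K0.subtype) (c ∘ₗ K0.subtype)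
      (fun k hk => H k (fun j => by
        refine Fin.cases ?_ ?_ j
        · exact k.2
        · exact hk))
    let c' : K →ₗ[R] R := t • c - ∑ j, b j • i j.succ
    have hc' : ∀ k, c' k = t * c k - ∑ j, b j * i j.succ k := fun k => by
      simp [c', LinearMap.sum_apply]
    have hc0 : ∀ k, i 0 k ∈ p → c' k ∈ p := fun k hk => by
      rw [hc']
      exact hb ⟨k, hk⟩
    by_cases h0 : ∀ k, i 0 k ∈ p
    · refine ⟨t, ht, Fin.cons 0 b, fun k => ?_⟩
      have := hc0 k (h0 k)
      rw [hc'] at this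
      simpa [Fin.sum_univ_succ] using this
    · push Not at h0
      obtain ⟨k0, hk0⟩ := h0
      refine ⟨i 0 k0 * t, fun h => (hp.mem_or_mem h).elim hk0 ht,
        Fin.cons (c' k0) (fun j => i 0 k0 * b j), fun k => ?_⟩
      have h1 := hc0 (i 0 k0 • k - i 0 k • k0) (by
        simp [mul_comm])
      rw [map_sub, map_smul, map_smul, smul_eq_mul, smul_eq_mul, hc' k] at h1
      convert h1 using 1
      rw [Fin.sum_univ_succ]
      simp only [Fin.cons_zero, Fin.cons_succ, mul_sub, Finset.mul_sum]
      simp only [mul_assoc]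
      ring

open Polynomial in
theorem exists_charpoly (p : Ideal R) [Module.Finite R K] (φ : Module.End R K)
    (hφ : LinearMap.range φ ≤ p • ⊤) : ∃ χ : R[X], χ.Monic ∧
      (∀ k, χ.coeff k ∈ p ^ (χ.natDegree - k)) ∧ aeval φ χ = 0 := by
  obtain ⟨χ, h1, h2, h3, h4⟩ :=
    LinearMap.exists_monic_and_natDegree_eq_and_coeff_mem_pow_and_aeval_eq_zero R φ p hφ
  exact ⟨χ, h1, h3, h4⟩

open Polynomial in
theorem ch_lemma (p : Ideal R) [hp : p.IsPrime] [Module.Finite R K] (θ : K →ₗ[R] K) {τ : R}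
    (hτ : τ ∉ p) (h : ∀ k, τ • k - θ k ∈ p • (⊤ : Submodule R K)) :
    ∃ (ρ : K →ₗ[R] K) (t : R), t ∉ p ∧ ∀ k, ρ (θ k) = t • k := by
  let φ : Module.End R K := algebraMap R _ τ - θ
  have hφ : LinearMap.range φ ≤ p • ⊤ := by
    rintro _ ⟨k, rfl⟩
    exact h k
  obtain ⟨χ, h1, h2, h3⟩ :=
    exists_charpoly p φ hφ
  obtain ⟨q, hq⟩ := X_sub_C_dvd_sub_C_eval (a := τ) (p := χ)
  refine ⟨aeval φ q, χ.eval τ, ?_, ?_⟩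
  · intro hmem
    have hmap : χ.map (Ideal.Quotient.mk p) = X ^ χ.natDegree := by
      ext k
      rw [coeff_map, coeff_X_pow]
      split_ifs with hk
      · rw [hk, h1.coeff_natDegree, map_one]
      · rw [Ideal.Quotient.eq_zero_iff_mem]
        rcases lt_or_gt_of_ne hk with hk | hk
        · exact Ideal.pow_le_self (by omega) (h2 k)
        · rw [coeff_eq_zero_of_natDegree_lt hk]
          exact zero_mem _
    have h4 : (χ.map (Ideal.Quotient.mk p)).eval (Ideal.Quotient.mk p τ) = 0 := by
      rw [eval_map_apply, Ideal.Quotient.eq_zero_iff_mem]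
      exact hmem
    rw [hmap, eval_pow, eval_X, ← map_pow, Ideal.Quotient.eq_zero_iff_mem] at h4
    exact hτ (hp.mem_of_pow_mem _ h4)
  · intro k
    rw [mul_comm] at hq
    have h5 := congrArg (aeval φ) hq
    rw [map_sub, h3, map_mul, map_sub, aeval_X, aeval_C, aeval_C] at h5
    have h6 := LinearMap.congr_fun h5 k
    simp only [zero_sub, LinearMap.neg_apply, Module.algebraMap_end_apply, Module.End.mul_apply,
      LinearMap.sub_apply, φ, sub_sub_cancel_left, map_neg] at h6
    exact (neg_injective h6).symm

theorem mem_smul_top_pi (p : Ideal R) {n : ℕ} (v : Fin n → R) (h : ∀ j, v j ∈ p) :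
    v ∈ p • (⊤ : Submodule R (Fin n → R)) := by
  rw [pi_eq_sum_univ' v]
  exact Submodule.sum_mem _ fun j _ => Submodule.smul_mem_smul (h j) trivial

variable [IsNoetherianRing R]

theorem Star.exists0 (p : Ideal R) [hp : p.IsPrime] [Module.Finite R X] (h0 : spI 0 X ≤ p)
    (h1 : ¬ spI 1 X ≤ p) : Star p 0 ∅ X := by
  obtain ⟨n, e, he⟩ := Module.Finite.exists_fin' R X
  have hses := isSES_ker he
  set K := LinearMap.ker e with hK
  have := hses.finite_left
  obtain ⟨s, hs, hsp⟩ := SetLike.not_le_iff_exists.1 h1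
  have hs' : SP K s := (sp_syz_iff hses).1 hs
  by_contra hcon
  have H : ∀ (c : K →ₗ[R] R) (a : K), (∀ j, a.1 j ∈ p) → c a ∈ p := by
    intro c a ha
    by_contra hca
    exact hcon ⟨ModuleCat.of R K, ModuleCat.of R (Fin n → R), K.subtype, e,
      inferInstanceAs (Module.Finite R (Fin n → R)),
      inferInstanceAs (Module.Projective R (Fin n → R)), hses, a, c,
      mem_smul_top_pi p _ ha, hca, by simp⟩
  obtain ⟨m, g, hg⟩ := Module.Finite.exists_fin' R K
  obtain ⟨σ, hσ⟩ := hs'.cover hg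
  have hL := fun l : Fin m => lin_alg p n K (fun j => LinearMap.proj j ∘ₗ K.subtype)
    (LinearMap.proj l ∘ₗ σ) (fun k hk => H _ k hk)
  choose t ht b hb using hL
  let T := ∏ l, t l
  have hT : T ∉ p := by
    intro h
    rw [hp.prod_mem_iff] at h
    obtain ⟨l, -, hl⟩ := h
    exact ht l hl
  let Bm : (Fin n → R) →ₗ[R] (Fin m → R) := LinearMap.pi fun l =>
    (∏ l' ∈ Finset.univ.erase l, t l') • ∑ j, b l j • LinearMap.proj j
  have hB : ∀ (k : K) (l), T * σ k l - Bm k.1 l ∈ p := by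
    intro k l
    have h5 : Bm k.1 l = (∏ l' ∈ Finset.univ.erase l, t l') * ∑ j, b l j * k.1 j := by
      simp [Bm, LinearMap.sum_apply]
    rw [h5]
    have : T = (∏ l' ∈ Finset.univ.erase l, t l') * t l :=
      (Finset.prod_erase_mul _ _ (Finset.mem_univ l)).symm
    rw [this, mul_assoc, ← mul_sub]
    exact p.mul_mem_left _ (hb l k)
  obtain ⟨ρ, t', ht', hρ⟩ := ch_lemma p (g ∘ₗ Bm ∘ₗ K.subtype) (τ := T * s)
    (fun h => (hp.mem_or_mem h).elim hT hsp) (fun k => by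
      have : (T * s) • k - (g ∘ₗ Bm ∘ₗ K.subtype) k = g (T • σ k - Bm k.1) := by
        rw [map_sub, map_smul, hσ, mul_smul]; rfl
      rw [this]
      exact map_smul_top g (mem_smul_top_pi p _ (hB k)))
  obtain ⟨v, hv⟩ := hses.desc (t' • LinearMap.id - K.subtype ∘ₗ ρ ∘ₗ g ∘ₗ Bm) (fun k => by
    have := congrArg Subtype.val (hρ k)
    simp only [LinearMap.comp_apply] at this
    simp only [LinearMap.sub_apply, LinearMap.comp_apply, LinearMap.smul_apply,
      LinearMap.id_apply, Submodule.subtype_apply] at this ⊢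
    rw [this]
    simp)
  refine ht' (h0 (?_ : SP X t'))
  refine SP.of_cover e v (fun x => ?_)
  obtain ⟨f, rfl⟩ := he x
  rw [hv]
  simp only [LinearMap.sub_apply, LinearMap.comp_apply, map_sub, hses.comp_zero, sub_zero]
  simp

theorem Star.exists (p : Ideal R) [hp : p.IsPrime] [Module.Finite R X] (n : ℕ)
    (h0 : spI n X ≤ p) (h1 : ¬ spI (n+1) X ≤ p) : Star p n ∅ X := by
  induction n generalizing X with
  | zero => exact Star.exists0 p h0 h1
  | succ n ih =>
    obtain ⟨K, F, i, e, h2, h3, h⟩ := exists_cover_ses R X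
    have := h.finite_left
    refine ⟨K, F, i, e, h2, h3, h, ih (fun s hs => h0 ((sp_syz_iff h).2 hs)) (fun hle => h1 ?_)⟩
    exact fun s hs => hle ((sp_syz_iff h).1 hs)

end P10

section P11
open CategoryTheory
set_option linter.unusedSectionVars false
variable {R : Type u} [CommRing R]
variable {A B C K F M N Q X C' F' : Type u}
  [AddCommGroup A] [Module R A] [AddCommGroup B] [Module R B] [AddCommGroup C] [Module R C]
  [AddCommGroup K] [Module R K] [AddCommGroup F] [Module R F] [AddCommGroup M] [Module R M]
  [AddCommGroup X] [Module R X] [AddCommGroup N] [Module R N] [AddCommGroup Q] [Module R Q]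
  [AddCommGroup C'] [Module R C'] [AddCommGroup F'] [Module R F']

open RingTheory.Sequence

/-- Weak regularity of a list read from the right. -/
def WR (M : Type u) [AddCommGroup M] [Module R M] : List R → Prop
  | [] => True
  | r :: l => WR M l ∧ ∀ x : M, r • x ∈ Ideal.ofList l • (⊤ : Submodule R M) →
      x ∈ Ideal.ofList l • (⊤ : Submodule R M)

theorem ofList_reverse (l : List R) : Ideal.ofList l.reverse = Ideal.ofList l := by
  simp [Ideal.ofList]

theorem isSMulRegular_quot_iff (r : R) (P : Submodule R M) :
    IsSMulRegular (M ⧸ P) r ↔ ∀ x : M, r • x ∈ P → x ∈ P := by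
  rw [isSMulRegular_iff_right_eq_zero_of_smul]
  constructor
  · intro h x hx
    have := h (Submodule.Quotient.mk x) (by
      rw [← Submodule.Quotient.mk_smul, Submodule.Quotient.mk_eq_zero]; exact hx)
    rwa [Submodule.Quotient.mk_eq_zero] at this
  · intro h x hx
    obtain ⟨x, rfl⟩ := Submodule.Quotient.mk_surjective _ x
    rw [← Submodule.Quotient.mk_smul, Submodule.Quotient.mk_eq_zero] at hx
    rw [Submodule.Quotient.mk_eq_zero]
    exact h x hx

theorem WR_iff (l : List R) : WR M l ↔ IsWeaklyRegular M l.reverse := by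
  induction l with
  | nil => simp [WR]
  | cons r l ih =>
    rw [List.reverse_cons, isWeaklyRegular_append_iff, isWeaklyRegular_singleton_iff, WR, ih,
      isSMulRegular_quot_iff, ofList_reverse]

theorem WR_proj [Module.Projective R F] {l : List R} (h : WR R l) : WR F l := by
  rw [WR_iff] at h ⊢
  have h2 := h.isWeaklyRegular_lTensor (M₂ := F)
  exact ((TensorProduct.rid R F).isWeaklyRegular_congr _).1 h2

theorem mem_ofList_cons {r : R} {l : List R} {x : M} :
    x ∈ Ideal.ofList (r :: l) • (⊤ : Submodule R M) ↔
      ∃ y z, z ∈ Ideal.ofList l • (⊤ : Submodule R M) ∧ x = r • y + z := by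
  rw [Ideal.ofList_cons_smul, Submodule.mem_sup]
  constructor
  · rintro ⟨y, hy, z, hz, rfl⟩
    rw [Submodule.mem_smul_pointwise_iff_exists] at hy
    obtain ⟨b, -, rfl⟩ := hy
    exact ⟨b, z, hz, rfl⟩
  · rintro ⟨y, z, hz, rfl⟩
    exact ⟨r • y, Submodule.smul_mem_pointwise_smul _ _ _ trivial, z, hz, rfl⟩

theorem I_lemma {i : K →ₗ[R] F} {e : F →ₗ[R] A} (h : IsSES i e) {l : List R} (hA : WR A l) :
    ∀ x, i x ∈ Ideal.ofList l • (⊤ : Submodule R F) → x ∈ Ideal.ofList l • (⊤ : Submodule R K) := by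
  induction l with
  | nil =>
    intro x hx
    simp only [Ideal.ofList_nil, Submodule.bot_smul, Submodule.mem_bot] at hx ⊢
    exact h.1 (by simpa using hx)
  | cons r l ih =>
    intro x hx
    obtain ⟨f, g, hg, hx⟩ := mem_ofList_cons.1 hx
    have h1 : r • e f ∈ Ideal.ofList l • (⊤ : Submodule R A) := by
      have : r • e f = - e g := by
        have := h.comp_zero x
        rw [hx, map_add, map_smul] at this
        exact eq_neg_of_add_eq_zero_left this
      rw [this]
      exact neg_mem (map_smul_top e hg)
    have h2 := hA.2 _ h1
    have h3 : Ideal.ofList l • (⊤ : Submodule R A) =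
        Submodule.map e (Ideal.ofList l • (⊤ : Submodule R F)) := by
      rw [Submodule.map_smul'', Submodule.map_top, LinearMap.range_eq_top.2 h.2.1]
    rw [h3] at h2
    obtain ⟨g', hg', hgg⟩ := h2
    obtain ⟨y, hy⟩ := h.exists_pre (f - g') (by rw [map_sub, hgg, sub_self])
    rw [mem_ofList_cons]
    refine ⟨y, x - r • y, ih hA.1 _ ?_, by abel⟩
    rw [map_sub, map_smul, hy, hx, smul_sub]
    have : r • f + g - (r • f - r • g') = g + r • g' := by abel
    rw [this]
    exact add_mem hg (Submodule.smul_mem _ _ hg')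

theorem WR_syz {i : K →ₗ[R] F} {e : F →ₗ[R] A} (h : IsSES i e) {r : R} {l : List R} (hA : WR A l)
    (hF : ∀ x : F, r • x ∈ Ideal.ofList l • (⊤ : Submodule R F) →
      x ∈ Ideal.ofList l • (⊤ : Submodule R F)) (hK : WR K l) : WR K (r :: l) := by
  refine ⟨hK, fun x hx => I_lemma h hA _ (hF _ ?_)⟩
  rw [← map_smul]
  exact map_smul_top i hx

theorem WR_syz' {i : K →ₗ[R] F} {e : F →ₗ[R] A} (h : IsSES i e) {l : List R} (hA : WR A l)
    (hF : WR F l) : WR K l := by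
  induction l with
  | nil => trivial
  | cons r l ih => exact WR_syz h hA.1 hF.2 (ih hA.1 hF.1)

theorem WR.suffix {l1 l0 : List R} (h : WR M (l1 ++ l0)) : WR M l0 := by
  induction l1 with
  | nil => exact h
  | cons r l ih => exact ih h.1

theorem Star.false_of_WR {q : Ideal R} {J : Set R} {z : R} (m : ℕ) :
    ∀ (X : Type u) [AddCommGroup X] [Module R X] (_ : Star q m J X) (l1 l0 : List R)
    (_ : WR R (l1 ++ l0)) (_ : WR X l0) (_ : l1.length ≤ m)
    (_ : ∀ x, x * z ∈ Ideal.ofList (l1 ++ l0) ↔ x ∈ q), False := by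
  induction m with
  | zero =>
    intro X _ _ h l1 l0 hR hX hl hz
    obtain ⟨K, F, i, e, h1, h2, h3, a, c, h4, h5, -⟩ := h
    obtain rfl : l1 = [] := List.eq_nil_of_length_eq_zero (by omega)
    rw [List.nil_append] at hz
    have h6 : i (z • a) ∈ Ideal.ofList l0 • (⊤ : Submodule R F) := by
      rw [map_smul]
      have h7 : ∀ y ∈ q • (⊤ : Submodule R F), z • y ∈ Ideal.ofList l0 • (⊤ : Submodule R F) := by
        intro y hy
        refine Submodule.smul_induction_on hy (fun r hr n hn => ?_) (fun x y hx hy => ?_)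
        · rw [smul_smul]
          exact Submodule.smul_mem_smul (by rw [mul_comm]; exact (hz r).2 hr) trivial
        · rw [smul_add]; exact add_mem hx hy
      exact h7 _ h4
    have h8 := map_smul_top c (I_lemma h3 hX _ h6)
    rw [map_smul, smul_eq_mul, smul_eq_mul, Ideal.mul_top, mul_comm] at h8
    exact h5 ((hz _).1 h8)
  | succ m ih =>
    intro X _ _ h l1 l0 hR hX hl hz
    obtain ⟨K, F, i, e, _, _, h3, h4⟩ := h
    rcases List.eq_nil_or_concat l1 with rfl | ⟨l1', r, rfl⟩
    · exact ih K h4 [] l0 hR (WR_syz' h3 hX (WR_proj hR)) (by simp) hz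
    · simp only [List.concat_eq_append, List.append_assoc, List.singleton_append] at hR hz
      have hF : WR F (r :: l0) := WR_proj hR.suffix
      exact ih K h4 l1' (r :: l0) hR (WR_syz h3 hX hF.2 (WR_syz' h3 hX hF.1))
        (by simpa using hl) hz

theorem le_gradeE {I : Ideal R} {rs : List R} (h : ∀ r ∈ rs, r ∈ I) (h2 : IsWeaklyRegular R rs) :
    (rs.length : ℕ∞) ≤ gradeE R I := le_sSup ⟨rs, h, h2, rfl⟩

theorem grade_bound [IsNoetherianRing R] [Module.Finite R X] {p : Ideal R} [p.IsPrime] {n N : ℕ}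
    (h0 : spI n X ≤ p) (h1 : spI N X = (⊤ : Ideal R)) : ((n + 1 : ℕ) : ℕ∞) ≤ gradeE R p := by
  by_contra hcon
  have hlt : gradeE R p < ((n + 1 : ℕ) : ℕ∞) := not_le.1 hcon
  obtain ⟨j, hj⟩ := ENat.ne_top_iff_exists.1 (ne_top_of_lt hlt)
  rw [← hj] at hlt
  have hjn : j < n + 1 := by exact_mod_cast hlt
  obtain ⟨rs, hrs, hreg, hlen⟩ := exists_rs_of_grade (n := j) (I := p) hj.le
  replace hlen : rs.length = j := by
    refine le_antisymm ?_ hlen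
    have := le_gradeE hrs hreg
    rw [← hj] at this
    exact_mod_cast this
  have hIp : Ideal.ofList rs ≤ p := Ideal.span_le.2 hrs
  have hno : ∀ x ∈ p, ¬ IsSMulRegular (R ⧸ Ideal.ofList rs) x := by
    intro x hx hr
    have h5 : IsWeaklyRegular R (rs ++ [x]) := by
      rw [isWeaklyRegular_append_iff, isWeaklyRegular_singleton_iff, isSMulRegular_quot_iff]
      rw [isSMulRegular_quot_iff] at hr
      exact ⟨hreg, by simpa using hr⟩
    have h6 := le_gradeE (I := p) (rs := rs ++ [x]) (by
      intro r hr
      rcases List.mem_append.1 hr with h | h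
      · exact hrs r h
      · rw [List.mem_singleton.1 h]; exact hx) h5
    rw [← hj, List.length_append, hlen] at h6
    have : j + 1 ≤ j := by exact_mod_cast h6
    omega
  obtain ⟨q, hq, hpq⟩ : ∃ q ∈ associatedPrimes R (R ⧸ Ideal.ofList rs), p ≤ q := by
    apply (Ideal.subset_union_prime_finite (associatedPrimes.finite R (R ⧸ Ideal.ofList rs))
      p p (fun I hin _ _ => IsAssociatedPrime.isPrime hin)).mp
    rw [biUnion_associatedPrimes_eq_compl_regular R (R ⧸ Ideal.ofList rs)]
    exact fun r hr => hno r hr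
  have := hq.isPrime
  obtain ⟨z, hz⟩ := (isAssociatedPrime_iff.1 hq).2
  obtain ⟨z, rfl⟩ := Ideal.Quotient.mk_surjective z
  have hz' : ∀ x, x * z ∈ Ideal.ofList rs ↔ x ∈ q := by
    intro x
    rw [hz, Submodule.mem_colon_singleton, Submodule.mem_bot, ← Ideal.Quotient.eq_zero_iff_mem]
    rfl
  classical
  have hex : ∃ m, ¬ spI m X ≤ q := ⟨N, fun h => this.ne_top (top_le_iff.1 (h1 ▸ h))⟩
  have hm := Nat.find_spec hex
  have hmn : n < Nat.find hex := by
    rw [Nat.lt_find_iff]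
    intro k hk
    exact not_not.2 (((spI_mono hk).trans h0).trans hpq)
  obtain ⟨m, hm'⟩ : ∃ m, Nat.find hex = m + 1 := ⟨Nat.find hex - 1, by omega⟩
  have hm2 := not_not.1 (Nat.find_min hex (m := m) (by omega))
  rw [hm'] at hm
  have hS := Star.exists q m hm2 hm
  refine hS.false_of_WR m X rs.reverse [] (z := z) ?_ trivial ?_ ?_
  · rw [List.append_nil, WR_iff, List.reverse_reverse]; exact hreg
  · rw [List.length_reverse]; omega
  · rw [List.append_nil, ofList_reverse]; exact hz'

theorem gradeE_ne_top [IsNoetherianRing R] (p : Ideal R) [hp : p.IsPrime] : gradeE R p ≠ ⊤ := by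
  obtain ⟨d, hd⟩ : ∃ d : ℕ, ringKrullDim (Localization.AtPrime p) ≤ d := by
    have h := IsLocalRing.maximalIdeal_height_eq_ringKrullDim (R := Localization.AtPrime p)
    have h2 : (IsLocalRing.maximalIdeal (Localization.AtPrime p)).height ≠ ⊤ :=
      Ideal.height_ne_top_of_isPrime
    obtain ⟨d, hd⟩ := ENat.ne_top_iff_exists.1 h2
    refine ⟨d, ?_⟩
    rw [← h, ← hd]; rfl
  intro htop
  obtain ⟨rs, hrs, hreg, hlen⟩ := exists_rs_of_grade (n := d + 1) (I := p) (by rw [htop]; exact le_top)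
  have h3 := IsWeaklyRegular.isRegular_of_isLocalization_of_mem (Localization.AtPrime p) p hreg hrs
  have h4 := ringKrullDim_add_length_eq_ringKrullDim_of_isRegular _ h3
  have h5 : Ideal.ofList (List.map (algebraMap R (Localization.AtPrime p)) rs) ≠ ⊤ := by
    have := h3.2.symm
    simpa using this
  have h6 : Nontrivial (Localization.AtPrime p ⧸
      Ideal.ofList (List.map (algebraMap R (Localization.AtPrime p)) rs)) :=
    Ideal.Quotient.nontrivial_iff.2 h5
  have h7 := ringKrullDim_nonneg_of_nontrivial (R := Localization.AtPrime p ⧸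
      Ideal.ofList (List.map (algebraMap R (Localization.AtPrime p)) rs))
  rw [List.length_map] at h4
  have h8 : ((rs.length : ℕ) : WithBot ℕ∞) ≤ d := by
    refine le_trans ?_ (h4.le.trans hd)
    exact le_add_of_nonneg_left h7
  have h9 : rs.length ≤ d := by exact_mod_cast h8
  omega
end P11

section P12
open CategoryTheory
set_option linter.unusedSectionVars false
variable {R : Type u} [CommRing R] [IsNoetherianRing R]
variable {A B C K F M N Q X C' F' : Type u}
  [AddCommGroup A] [Module R A] [AddCommGroup B] [Module R B] [AddCommGroup C] [Module R C]
  [AddCommGroup K] [Module R K] [AddCommGroup F] [Module R F] [AddCommGroup M] [Module R M]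
  [AddCommGroup X] [Module R X] [AddCommGroup N] [Module R N] [AddCommGroup Q] [Module R Q]
  [AddCommGroup C'] [Module R C'] [AddCommGroup F'] [Module R F']
  {𝒳 : Set (ModuleCat.{u} R)}

theorem exists_syz (h𝒳 : IsResolving R 𝒳) (k : ℕ) : ∀ (X : Type u) [AddCommGroup X] [Module R X]
    (_ : Mem 𝒳 X), ∃ X' : ModuleCat.{u} R, Mem 𝒳 X' ∧ ∀ n (s : R), sp n X' s ↔ sp (n + k) X s := by
  induction k with
  | zero => exact fun X _ _ h => ⟨ModuleCat.of R X, h, fun _ _ => Iff.rfl⟩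
  | succ k ih =>
    intro X _ _ h
    have := h.finite h𝒳
    obtain ⟨K, F, i, e, _, _, h3⟩ := exists_cover_ses R X
    obtain ⟨X', h4, h5⟩ := ih K (h.syz h𝒳 h3)
    refine ⟨X', h4, fun n s => ?_⟩
    rw [h5, ← add_assoc, sp_syz_iff h3]

/-- `f` is the function attached to `𝒳`. -/
structure Attached (𝒳 : Set (ModuleCat.{u} R)) (f : PrimeSpectrum R → ℕ) : Prop where
  upper : ∀ (p : PrimeSpectrum R) (X : ModuleCat.{u} R), Mem 𝒳 X → ∃ s ∉ p.asIdeal, sp (f p) X s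
  lower : ∀ (p : PrimeSpectrum R) (n : ℕ), n + 1 = f p →
    ∃ X : ModuleCat.{u} R, Mem 𝒳 X ∧ ∀ s, sp n X s → s ∈ p.asIdeal

theorem exists_attached (h𝒳 : IsResolving R 𝒳) (hpd : 𝒳 ⊆ PDcat R) :
    ∃ f, GradeConsistent R f ∧ Attached 𝒳 f := by
  classical
  let S : PrimeSpectrum R → ℕ → Prop := fun p n =>
    ∀ X : ModuleCat.{u} R, Mem 𝒳 X → ∃ s ∉ p.asIdeal, sp n X s
  have key : ∀ p, ∃ N : ℕ, (N : ℕ∞) = gradeE R p.asIdeal ∧ S p N := by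
    intro p
    obtain ⟨N, hN⟩ := ENat.ne_top_iff_exists.1 (gradeE_ne_top p.asIdeal)
    refine ⟨N, hN, fun X hX => ?_⟩
    have := hX.finite h𝒳
    by_contra hcon
    push Not at hcon
    obtain ⟨m, hm⟩ := (mem_PDcat_iff X).1 (hpd hX)
    have h1 := grade_bound (X := X) (p := p.asIdeal) (n := N) (N := m)
      (fun s hs => by
        by_contra h
        exact hcon s h hs) hm
    rw [← hN] at h1
    have : N + 1 ≤ N := by exact_mod_cast h1
    omega
  have hex : ∀ p, ∃ n, S p n := fun p => (key p).imp fun _ h => h.2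
  refine ⟨fun p => Nat.find (hex p), ⟨fun p => ?_, fun p q hpq => ?_⟩, fun p => ?_, fun p n hn => ?_⟩
  · obtain ⟨N, hN, hS⟩ := key p
    rw [← hN]
    exact_mod_cast Nat.find_min' (hex p) hS
  · refine Nat.find_min' (hex p) (fun X hX => ?_)
    obtain ⟨s, hs, h⟩ := Nat.find_spec (hex q) X hX
    exact ⟨s, fun h' => hs (hpq h'), h⟩
  · exact Nat.find_spec (hex p)
  · have := Nat.find_min (hex p) (m := n) (by omega)
    by_contra hcon
    push Not at hcon
    apply this
    intro X hX
    obtain ⟨s, h1, h2⟩ := hcon X hX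
    exact ⟨s, h2, h1⟩

theorem localPdim_self_nonneg (p : PrimeSpectrum R) :
    ((0 : ℕ∞) : WithBot ℕ∞) ≤ localPdim R p (ModuleCat.of R R) := by
  refine le_sInf ?_
  rintro x (⟨-, h⟩ | ⟨n, rfl, -⟩)
  · exfalso
    have h0 : LocalizedModule.mkLinearMap p.asIdeal.primeCompl R (1 : R) =
        LocalizedModule.mkLinearMap p.asIdeal.primeCompl R (0 : R) := h.elim _ _
    obtain ⟨c, hc⟩ := (IsLocalizedModule.eq_iff_exists p.asIdeal.primeCompl
      (LocalizedModule.mkLinearMap p.asIdeal.primeCompl R)).1 h0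
    refine c.2 ?_
    have : (c : R) = 0 := by simpa [Submonoid.smul_def] using hc
    rw [this]
    exact zero_mem _
  · exact_mod_cast Nat.zero_le n

theorem Attached.sup {f : PrimeSpectrum R → ℕ} (h𝒳 : IsResolving R 𝒳) (hf : Attached 𝒳 f)
    (p : PrimeSpectrum R) : ((f p : ℕ∞) : WithBot ℕ∞) = ⨆ X ∈ 𝒳, localPdim R p X := by
  refine le_antisymm ?_ (iSup₂_le fun X hX => ?_)
  · rcases hfp : f p with _ | n
    · exact (localPdim_self_nonneg p).trans
        (le_iSup₂_of_le (ModuleCat.of R R) (mem_proj h𝒳 (A := R)) le_rfl)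
    · obtain ⟨X, hX, h⟩ := hf.lower p n hfp.symm
      have := h𝒳.fg X hX
      refine le_trans ?_ (le_iSup₂_of_le X hX le_rfl)
      have h1 : ¬ localPdim R p X ≤ ((n : ℕ∞) : WithBot ℕ∞) := by
        have := localPdim_le_iff p n X
        intro h2
        exact this.1 h2 (fun s hs => h s hs)
      have h2 := not_le.1 h1
      generalize localPdim R p X = x at h2
      induction x with
      | bot => simp at h2
      | coe x =>
        have h3 : (n : ℕ∞) < x := WithBot.coe_lt_coe.1 h2
        refine WithBot.coe_le_coe.2 ?_
        push_cast
        exact Order.add_one_le_of_lt h3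
  · have := h𝒳.fg X hX
    obtain ⟨s, hs, h⟩ := hf.upper p X hX
    refine (localPdim_le_iff p (f p) X).2 (fun h' => hs (h' h))

theorem attached_psi {f : PrimeSpectrum R → ℕ} (hf : GradeConsistent R f) :
    Attached (psiPd R f) f := by
  refine ⟨fun p X hX => (mem_psiPd.1 hX).2 p, fun p n hn => ?_⟩
  obtain ⟨Q, hQ⟩ := exists_IsQ (R := R) n (R ⧸ p.asIdeal)
  have hg : ((n + 1 : ℕ) : ℕ∞) ≤ gradeE R p.asIdeal := by rw [hn]; exact hf.1 p
  have hE : ∀ j ≤ n, EZ R j (R ⧸ p.asIdeal) := fun j hj => EZ.of_grade hg hj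
  have := hQ.finite
  refine ⟨Q, ?_, fun s hs => ?_⟩
  · refine mem_psiPd.2 ⟨this, fun q => ?_⟩
    by_cases hpq : p.asIdeal ≤ q.asIdeal
    · refine ⟨1, q.isPrime.one_notMem, ?_⟩
      exact (hQ.sp_one hE).mono (by rw [hn]; exact hf.2 p q hpq)
    · obtain ⟨s, hs, hsq⟩ := SetLike.not_le_iff_exists.1 hpq
      refine ⟨s, hsq, ?_⟩
      have h0 : sp 0 Q s := hQ.SP_ann (fun x => by
        obtain ⟨x, rfl⟩ := Ideal.Quotient.mk_surjective x
        rw [← Ideal.Quotient.mk_eq_mk, ← Submodule.Quotient.mk_smul, smul_eq_mul,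
          Submodule.Quotient.mk_eq_zero]
        exact Ideal.mul_mem_right _ _ hs)
      exact h0.mono (Nat.zero_le _)
  · have := hQ.ann hE hs (Ideal.Quotient.mk _ 1)
    rw [← Ideal.Quotient.mk_eq_mk, ← Submodule.Quotient.mk_smul, smul_eq_mul,
          Submodule.Quotient.mk_eq_zero, mul_one] at this
    exact this

theorem EZ.of_lt {f : PrimeSpectrum R → ℕ} (hf : GradeConsistent R f) {p : PrimeSpectrum R} {i : ℕ}
    (hi : i < f p) : EZ R i (R ⧸ p.asIdeal) := by
  refine EZ.of_grade (n := i) (le_trans ?_ (hf.1 p)) le_rfl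
  exact_mod_cast hi

theorem Attached.TT {f : PrimeSpectrum R → ℕ} (h𝒳 : IsResolving R 𝒳) (hgc : GradeConsistent R f)
    (hf : Attached 𝒳 f) (p : PrimeSpectrum R) : ∀ i < f p, TT 𝒳 i (R ⧸ p.asIdeal) := by
  have wf : WellFounded (InvImage (· > ·) (PrimeSpectrum.asIdeal (R := R))) :=
    InvImage.wf _ wellFounded_gt
  induction p using wf.induction with
  | _ p ihp =>
  have outer : ∀ q : PrimeSpectrum R, p.asIdeal < q.asIdeal → ∀ i < f q, ResolvPaper.TT 𝒳 i (R ⧸ q.asIdeal) :=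
    fun q hq => ihp q hq
  intro i
  induction i using Nat.strong_induction_on with
  | _ i ihi =>
  intro hi
  obtain ⟨X0, hX0, hX0p⟩ := hf.lower p (f p - 1) (by omega)
  obtain ⟨X, hX, hXX⟩ := exists_syz h𝒳 (f p - 1 - i) X0 hX0
  have hXf := hX.finite h𝒳
  have hS : Star p.asIdeal i ∅ X := by
    refine Star.exists p.asIdeal i (fun s hs => ?_) (fun h => ?_)
    · have := (hXX i s).1 hs
      rw [show i + (f p - 1 - i) = f p - 1 by omega] at this
      exact hX0p s this
    · obtain ⟨s, hs, h1⟩ := hf.upper p X0 hX0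
      refine hs (h ((hXX (i+1) s).2 ?_))
      rw [show i + 1 + (f p - 1 - i) = f p by omega]
      exact h1
  obtain ⟨X', hX'f, hX', hS', hsupp⟩ := hS.full h𝒳 hX
  obtain ⟨C, a, b, s, hs, hC, hab⟩ := hS'.useUU h𝒳 (j := 0) (UU.of_mem hX') (fun k hk => by
    rw [Nat.zero_add]
    refine LH.of_filt h𝒳 (fun q hq => ?_)
    have hpq : p.asIdeal ≤ q.asIdeal := hsupp q ((spI_mono (Nat.zero_le k)).trans hq)
    have hkq : k < f q := by
      by_contra hcon
      obtain ⟨s, hs, h1⟩ := hf.upper q X' hX'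
      exact hs (hq (h1.mono (not_lt.1 hcon)))
    refine ⟨?_, EZ.of_lt hgc hkq⟩
    rcases hpq.lt_or_eq with h | h
    · exact outer q h k hkq
    · obtain rfl : p = q := PrimeSpectrum.ext h
      exact ihi k hk hkq)
  rw [Nat.zero_add] at hC
  obtain ⟨QC, hQC, hIC⟩ := hC
  obtain ⟨Q, hQ⟩ := exists_IsQ (R := R) i (R ⧸ p.asIdeal)
  have hQf := hQ.finite
  obtain ⟨P, u, v, _, _, huv⟩ := retrS hQ hIC a b hab
  refine ⟨Q, ?_, hQ⟩
  obtain ⟨F, π, _, _, hπ⟩ := exists_cover R Q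
  refine S_lemma' h𝒳 hπ v u huv (hQC.prod h𝒳 (mem_proj h𝒳)) ?_
  have hE : ∀ j ≤ i, EZ R j (R ⧸ p.asIdeal) := fun j hj => EZ.of_lt hgc (by omega)
  have hone : sp (i + 1) (Yx s π) (1 : R) := by
    have := Yx_sp s hπ (hQ.sp_one hE)
    rwa [mul_one] at this
  have hYf : Module.Finite R (Yx s π) := inferInstance
  refine star_mem h𝒳 hone (fun k => LH.of_filt h𝒳 (fun q hq => ?_))
  have hk : k < i + 1 := by
    by_contra hcon
    exact q.isPrime.one_notMem (hq (hone.mono (not_lt.1 hcon)))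
  have hsq : s ∈ q.asIdeal := hq (sp.mono (n := 0) (Nat.zero_le k) (Yx_SP s π))
  have hpq : p.asIdeal ≤ q.asIdeal := by
    intro t ht
    have h0 : sp 0 Q t := hQ.SP_ann (fun x => by
        obtain ⟨x, rfl⟩ := Ideal.Quotient.mk_surjective x
        rw [← Ideal.Quotient.mk_eq_mk, ← Submodule.Quotient.mk_smul, smul_eq_mul,
          Submodule.Quotient.mk_eq_zero]
        exact Ideal.mul_mem_right _ _ ht)
    have := hq ((Yx_sp s hπ h0).mono (Nat.zero_le k))
    exact (q.isPrime.mem_or_mem this).elim id id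
  have hlt : p.asIdeal < q.asIdeal := lt_of_le_of_ne hpq (fun h => hs (h ▸ hsq))
  have hkq : k < f q := by
    have := hgc.2 p q hpq
    omega
  exact ⟨outer q hlt k hkq, EZ.of_lt hgc hkq⟩

theorem Attached.psi_eq {f : PrimeSpectrum R → ℕ} (h𝒳 : IsResolving R 𝒳)
    (hgc : GradeConsistent R f) (hf : Attached 𝒳 f) : psiPd R f = 𝒳 := by
  apply Set.Subset.antisymm
  · intro M hM
    obtain ⟨h1, h2⟩ := mem_psiPd.1 hM
    obtain ⟨m, hm⟩ := (mem_PDcat_iff M).1 (psiPd_subset f hM)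
    have hm1 : sp m M (1 : R) := (Ideal.eq_top_iff_one _).1 hm
    refine star_mem h𝒳 hm1 (fun k => LH.of_filt h𝒳 (fun q hq => ?_))
    have hkq : k < f q := by
      by_contra hcon
      obtain ⟨s, hs, h1⟩ := h2 q
      exact hs (hq (h1.mono (not_lt.1 hcon)))
    exact ⟨hf.TT h𝒳 hgc q k hkq, EZ.of_lt hgc hkq⟩
  · intro M hM
    exact mem_psiPd.2 ⟨h𝒳.fg M hM, fun p => hf.upper p M hM⟩
end P12

/-- Theorem 1.2: `φ` and `ψ` are mutually inverse bijections between the resolving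
subcategories of `mod R` contained in `PD(R)` and the grade consistent functions
on `Spec R`. -/
theorem resolving_in_PD_classification [IsNoetherianRing R] :
    (∀ 𝒳 : Set (ModuleCat.{u} R), IsResolving R 𝒳 → 𝒳 ⊆ PDcat R →
      ∃ f : PrimeSpectrum R → ℕ, GradeConsistent R f ∧
        (∀ p : PrimeSpectrum R,
          ((f p : ℕ∞) : WithBot ℕ∞) = ⨆ X ∈ 𝒳, localPdim R p X) ∧
        psiPd R f = 𝒳) ∧
    (∀ f : PrimeSpectrum R → ℕ, GradeConsistent R f →
      IsResolving R (psiPd R f) ∧ psiPd R f ⊆ PDcat R ∧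
      (∀ p : PrimeSpectrum R,
        ((f p : ℕ∞) : WithBot ℕ∞) = ⨆ X ∈ psiPd R f, localPdim R p X)) := by
  refine ⟨fun 𝒳 h𝒳 hpd => ?_, fun f hf => ?_⟩
  · obtain ⟨f, hgc, hf⟩ := exists_attached h𝒳 hpd
    exact ⟨f, hgc, fun p => hf.sup h𝒳 p, hf.psi_eq h𝒳 hgc⟩
  · exact ⟨psiPd_resolving f, psiPd_subset f,
      fun p => (attached_psi hf).sup (psiPd_resolving f) p⟩

end ResolvPaper
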